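/- arXiv:1502.02624 — 3 statements merged into one kernel-verified Lean document; each statement's English description precedes it below -/
import Mathlib

section
/- There exists N such that for all n ≥ N and every odd integer d with 2^{n+1} − 7 ≤ d ≤ 2^{n+1} − 5, the 2-density of the set D := {i : 1 ≤ i ≤ d, i odd} \ {2^n − 1} equals 2/(2n−1); that is, every solution U of any length ℓ for D satisfies (2n−1)·s(U) ≥ 2ℓ, and some solution attains (2n−1)·s(U) = 2ℓ. -/
/-- The binary weight `s₂(m)`: the sum of the base-2 digits of `m`. -/
def s2 (m : ℕ) : ℕ := (Nat.digits 2 m).sum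

/-- The shift map on `{0, …, 2^ℓ - 1}`: it fixes `2^ℓ - 1` and sends any other `i`
to the remainder of `2·i` modulo `2^ℓ - 1`. -/
def shift2 (ℓ i : ℕ) : ℕ := if i = 2 ^ ℓ - 1 then i else (2 * i) % (2 ^ ℓ - 1)

/-- `U : ℕ → ℕ` (supported on `D`) is a solution of length `ℓ` for `D`:
`0 ≤ u_d ≤ 2^ℓ - 1` and `∑ d·u_d` is a positive multiple of `2^ℓ - 1`. -/
structure IsSolution (D : Finset ℕ) (ℓ : ℕ) (U : ℕ → ℕ) : Prop where
  len_pos : 1 ≤ ℓ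
  bounded : ∀ d, U d ≤ 2 ^ ℓ - 1
  supp_sub : ∀ d, d ∉ D → U d = 0
  dvd : (2 ^ ℓ - 1) ∣ ∑ d ∈ D, d * U d
  pos : 0 < ∑ d ∈ D, d * U d

/-- The weight `s(U) = ∑_{d ∈ D} s₂(u_d)` of a solution. -/
def weight (D : Finset ℕ) (U : ℕ → ℕ) : ℕ := ∑ d ∈ D, s2 (U d)

/-- The support map `φ_U(k) = (∑_{d ∈ D} d·δ^k(u_d)) / (2^ℓ - 1)` of a solution,
viewed as an `ℓ`-periodic function on `ℕ`. -/
def supportMap (D : Finset ℕ) (ℓ : ℕ) (U : ℕ → ℕ) (k : ℕ) : ℕ :=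
  (∑ d ∈ D, d * (shift2 ℓ)^[k] (U d)) / (2 ^ ℓ - 1)

/-- A solution is irreducible when its support map is injective on `ℤ/ℓℤ`,
i.e. injective on `{0, …, ℓ-1}`. -/
def IrreducibleSol (D : Finset ℕ) (ℓ : ℕ) (U : ℕ → ℕ) : Prop :=
  Set.InjOn (supportMap D ℓ U) ↑(Finset.range ℓ)

/-- `U` is a shift of `V` (coordinatewise iterate of the shift map). -/
def IsShiftOf (ℓ : ℕ) (U V : ℕ → ℕ) : Prop :=
  ∃ k, ∀ d, U d = (shift2 ℓ)^[k] (V d)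

/-- The set of odd integers `1 ≤ i ≤ d`. -/
def oddUpTo (d : ℕ) : Finset ℕ := (Finset.range (d + 1)).filter (fun i => i % 2 = 1)

/-- `D = {i : 1 ≤ i ≤ 2^{n+1} - 3, i odd}`. -/
def oddD (n : ℕ) : Finset ℕ := oddUpTo (2 ^ (n + 1) - 3)

/-- The solution with `u_a = 1` and all other coordinates `0`. -/
def sol1 (a : ℕ) : ℕ → ℕ := fun d => if d = a then 1 else 0

/-- The solution with `u_a = x`, `u_b = y` and all other coordinates `0`. -/
def sol2 (a x b y : ℕ) : ℕ → ℕ := fun d => if d = a then x else if d = b then y else 0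

/-- The solution with `u_a = x`, `u_b = y`, `u_c = z` and all other coordinates `0`. -/
def sol3 (a x b y c z : ℕ) : ℕ → ℕ :=
  fun d => if d = a then x else if d = b then y else if d = c then z else 0

/-!
Reading the digits of a solution `U` from the lowest to the highest, the carry starts at some `c`
with `(2 ^ ℓ - 1) * c = ∑ d * u_d`, each digit position adds to it the `d` whose digit is `1` and
then halves it, and after `ℓ` positions it is `c` again. So if a function `Q` on the positive
integers grows by at least `a` under doubling and by at most `C` under adding an element of `D`,
the total change `0` of `Q` along this cycle is at most `C * s(U) - a * ℓ`.

For `a = 2` and `C = 2 * n - 1` the function `Q x = 2 * ⌊log₂ x⌋ + [x is a power of 2]` works as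
soon as `D` avoids `2 ^ n - 1` (the step `1 → 2 ^ n` would cost `2 * n`) and the numbers above
`2 ^ (n + 1) - 4` (a step from `x ≤ 3` to `2 ^ (n + 1)` would cost at least `2 * n`). The bound is
attained through
`(2 ^ n - 3) * 2 ^ (n - 1) + (3 * 2 ^ (n - 1) - 1) * 1 = 2 ^ (2 * n - 1) - 1`, of weight `2`.
-/

lemma s2_eq_s2_div_two_add_mod_two (u : ℕ) : s2 u = s2 (u / 2) + u % 2 := by
  rcases u.eq_zero_or_pos with rfl | hu
  · rfl
  · simp only [s2, Nat.digits_def' one_lt_two hu, List.sum_cons, add_comm]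

lemma s2_two_pow (k : ℕ) : s2 (2 ^ k) = 1 := by
  simpa [s2] using
    congrArg List.sum (Nat.digits_base_pow_mul (k := k) (m := 1) one_lt_two one_pos)

lemma sum_sol2 {M : Type*} [AddCommMonoid M] {D : Finset ℕ} {a b : ℕ} (ha : a ∈ D) (hb : b ∈ D)
    (hab : a ≠ b) (x y : ℕ) (f : ℕ → ℕ → M) (hf : ∀ e, f e 0 = 0) :
    ∑ e ∈ D, f e (sol2 a x b y e) = f a x + f b y := by
  rw [Finset.sum_eq_add_of_mem a b ha hb hab fun e _ he => by simp [sol2, he.1, he.2, hf]]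
  simp [sol2, hab.symm]

lemma weight_sol2 {D : Finset ℕ} {a b : ℕ} (ha : a ∈ D) (hb : b ∈ D) (hab : a ≠ b) (x y : ℕ) :
    weight D (sol2 a x b y) = s2 x + s2 y :=
  sum_sol2 ha hb hab x y (fun _ => s2) fun _ => rfl

lemma isSolution_sol2 {D : Finset ℕ} {ℓ a b x y : ℕ} (ha : a ∈ D) (hb : b ∈ D) (hab : a ≠ b)
    (hℓ : 1 ≤ ℓ) (hx : x ≤ 2 ^ ℓ - 1) (hy : y ≤ 2 ^ ℓ - 1)
    (hdvd : 2 ^ ℓ - 1 ∣ a * x + b * y) (hpos : 0 < a * x + b * y) :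
    IsSolution D ℓ (sol2 a x b y) := by
  have hsum : ∑ e ∈ D, e * sol2 a x b y e = a * x + b * y :=
    sum_sol2 ha hb hab x y (· * ·) mul_zero
  refine ⟨hℓ, fun e => ?_, fun e he => ?_, hsum ▸ hdvd, hsum ▸ hpos⟩
  · unfold sol2
    split_ifs <;> omega
  · rw [sol2, if_neg (ne_of_mem_of_not_mem ha he).symm, if_neg (ne_of_mem_of_not_mem hb he).symm]

lemma IsSolution.exists_add_sum_eq {D : Finset ℕ} {ℓ : ℕ} {U : ℕ → ℕ} (hU : IsSolution D ℓ U) :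
    ∃ c, 0 < c ∧ c + ∑ d ∈ D, d * U d = 2 ^ ℓ * c := by
  obtain ⟨c, hc⟩ := hU.dvd
  refine ⟨c, Nat.pos_of_mul_pos_left (hc ▸ hU.pos), ?_⟩
  rw [hc, Nat.sub_one_mul, Nat.add_sub_cancel' (Nat.le_mul_of_pos_left c (by positivity))]

/-- A potential for `D` with gain `a` and cost `C`: a function on the positive integers (its value
at `0` is irrelevant) that grows by at least `a` under doubling and by at most `C` under adding an
element of `D`. Its existence bounds the 2-density of `D` below by `a / C`. -/
structure IsPotential (D : Finset ℕ) (a C : ℕ) (Q : ℕ → ℕ) : Prop where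
  add_le_two_mul : ∀ x, 0 < x → Q x + a ≤ Q (2 * x)
  add_le : ∀ d ∈ D, ∀ x, 0 < x → Q (x + d) ≤ Q x + C

namespace IsPotential

variable {D : Finset ℕ} {a C : ℕ} {Q : ℕ → ℕ}

lemma add_mul_le (hQ : IsPotential D a C Q) {d x : ℕ} (hd : d ∈ D) (hx : 0 < x) (m : ℕ) :
    Q (x + d * m) ≤ Q x + C * m := by
  induction m with
  | zero => rfl
  | succ m ih =>
    calc Q (x + d * (m + 1)) = Q (x + d * m + d) := by rw [mul_add_one, add_assoc]
      _ ≤ Q (x + d * m) + C := hQ.add_le d hd _ (by omega)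
      _ ≤ Q x + C * m + C := by gcongr
      _ = Q x + C * (m + 1) := by ring

lemma add_sum_le (hQ : IsPotential D a C Q) {x : ℕ} (hx : 0 < x) (b : ℕ → ℕ) :
    Q (x + ∑ d ∈ D, d * b d) ≤ Q x + C * ∑ d ∈ D, b d := by
  induction D using Finset.induction_on with
  | empty => simp
  | insert e D he ih =>
    have hD : IsPotential D a C Q :=
      ⟨hQ.add_le_two_mul, fun d hd => hQ.add_le d (Finset.mem_insert_of_mem hd)⟩
    rw [Finset.sum_insert he, Finset.sum_insert he]
    calc Q (x + (e * b e + ∑ d ∈ D, d * b d)) = Q (x + ∑ d ∈ D, d * b d + e * b e) := by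
          congr 1; ring
      _ ≤ Q (x + ∑ d ∈ D, d * b d) + C * b e :=
          hQ.add_mul_le (Finset.mem_insert_self e D) (by omega) _
      _ ≤ Q x + C * ∑ d ∈ D, b d + C * b e := by gcongr; exact ih hD
      _ = Q x + C * (b e + ∑ d ∈ D, b d) := by ring

lemma add_mul_length_le (hQ : IsPotential D a C Q) {ℓ x c : ℕ} {U : ℕ → ℕ} (hx : 0 < x)
    (hU : ∀ d, U d < 2 ^ ℓ) (hsum : x + ∑ d ∈ D, d * U d = 2 ^ ℓ * c) :
    Q c + a * ℓ ≤ Q x + C * weight D U := by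
  induction ℓ generalizing x U with
  | zero =>
    have hU0 : ∀ d, U d = 0 := fun d => Nat.lt_one_iff.1 (hU d)
    obtain rfl : x = c := by simpa [hU0] using hsum
    simp
  | succ ℓ ih =>
    have hsplit : ∑ d ∈ D, d * U d = ∑ d ∈ D, d * (U d % 2) + 2 * ∑ d ∈ D, d * (U d / 2) := by
      rw [Finset.mul_sum, ← Finset.sum_add_distrib]
      refine Finset.sum_congr rfl fun d _ => ?_
      rw [mul_left_comm, ← mul_add, Nat.mod_add_div]
    have hweight : weight D U = weight D (fun d => U d / 2) + ∑ d ∈ D, U d % 2 := by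
      simp only [weight, ← Finset.sum_add_distrib, ← s2_eq_s2_div_two_add_mod_two]
    obtain ⟨y, hy⟩ : ∃ y, x + ∑ d ∈ D, d * (U d % 2) = 2 * y :=
      ⟨2 ^ ℓ * c - ∑ d ∈ D, d * (U d / 2), by rw [pow_succ', mul_assoc] at hsum; omega⟩
    have hhalf : y + ∑ d ∈ D, d * (U d / 2) = 2 ^ ℓ * c := by
      rw [pow_succ', mul_assoc] at hsum; omega
    have hUhalf : ∀ d, U d / 2 < 2 ^ ℓ := fun d => Nat.div_lt_of_lt_mul (pow_succ' 2 ℓ ▸ hU d)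
    calc Q c + a * (ℓ + 1) = Q c + a * ℓ + a := by ring
      _ ≤ Q y + C * weight D (fun d => U d / 2) + a :=
          Nat.add_le_add_right (ih (by omega) hUhalf hhalf) a
      _ = Q y + a + C * weight D (fun d => U d / 2) := by ring
      _ ≤ Q (x + ∑ d ∈ D, d * (U d % 2)) + C * weight D (fun d => U d / 2) := by
          gcongr; exact hy ▸ hQ.add_le_two_mul y (by omega)
      _ ≤ Q x + C * ∑ d ∈ D, U d % 2 + C * weight D (fun d => U d / 2) := by
          gcongr; exact hQ.add_sum_le hx _
      _ = Q x + C * weight D U := by rw [hweight]; ring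

theorem mul_length_le_mul_weight (hQ : IsPotential D a C Q) {ℓ : ℕ} {U : ℕ → ℕ}
    (hU : IsSolution D ℓ U) : a * ℓ ≤ C * weight D U := by
  obtain ⟨c, hc, hsum⟩ := hU.exists_add_sum_eq
  have hlt : ∀ d, U d < 2 ^ ℓ := fun d => Nat.lt_of_le_pred (by positivity) (hU.bounded d)
  exact Nat.le_of_add_le_add_left (hQ.add_mul_length_le hc hlt hsum)

end IsPotential

/-- The potential `2 * ⌊log₂ x⌋ + [x is a power of 2]` behind the lower bound `2 / (2 * n - 1)`. -/
def logPotential (x : ℕ) : ℕ := 2 * Nat.log 2 x + if 2 ^ Nat.log 2 x = x then 1 else 0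

lemma logPotential_two_mul {x : ℕ} (hx : 0 < x) : logPotential (2 * x) = logPotential x + 2 := by
  have hlog : Nat.log 2 (2 * x) = Nat.log 2 x + 1 := by
    rw [mul_comm, Nat.log_mul_base one_lt_two hx.ne']
  simp only [logPotential, hlog, pow_succ', Nat.mul_right_inj two_ne_zero]
  ring

lemma logPotential_le (x : ℕ) : logPotential x ≤ 2 * Nat.log 2 x + 1 := by
  unfold logPotential
  split_ifs <;> omega

lemma two_mul_le_logPotential {x k : ℕ} (hx : 2 ^ k ≤ x) : 2 * k ≤ logPotential x := by
  have : k ≤ Nat.log 2 x := Nat.le_log_of_pow_le one_lt_two hx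
  unfold logPotential
  omega

lemma one_le_logPotential {x : ℕ} (hx : 0 < x) : 1 ≤ logPotential x := by
  obtain rfl | hx2 : x = 1 ∨ 2 ^ 1 ≤ x := by omega
  · simp [logPotential]
  · exact one_le_two.trans (two_mul_le_logPotential hx2)

lemma logPotential_add_le {n x d : ℕ} (hn : 2 ≤ n) (hx : 0 < x) (hd : d + 3 < 2 ^ (n + 1))
    (hne : d ≠ 2 ^ n - 1) : logPotential (x + d) ≤ logPotential x + (2 * n - 1) := by
  have hQx := one_le_logPotential hx
  have hQ := logPotential_le (x + d)
  have hpow : 2 ^ Nat.log 2 (x + d) ≤ x + d := Nat.pow_log_le_self 2 (by omega)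
  obtain hlt | hlog | hlog | hgt : Nat.log 2 (x + d) < n ∨ Nat.log 2 (x + d) = n ∨
      Nat.log 2 (x + d) = n + 1 ∨ n + 2 ≤ Nat.log 2 (x + d) := by omega
  · omega
  · by_cases hpow_eq : 2 ^ n = x + d
    · have : 2 * 1 ≤ logPotential x := two_mul_le_logPotential (by omega)
      omega
    · have : logPotential (x + d) = 2 * n := by
        rw [logPotential, hlog, if_neg hpow_eq, add_zero]
      omega
  · have : 2 * 2 ≤ logPotential x := two_mul_le_logPotential (by rw [hlog] at hpow; omega)
    omega
  · obtain ⟨j, hj⟩ : ∃ j, Nat.log 2 (x + d) = j + 1 := ⟨Nat.log 2 (x + d) - 1, by omega⟩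
    have hnj : 2 ^ (n + 1) ≤ 2 ^ j := Nat.pow_le_pow_right two_pos (by omega)
    have : 2 * j ≤ logPotential x :=
      two_mul_le_logPotential (by rw [hj, pow_succ'] at hpow; omega)
    omega

theorem isPotential_logPotential {n : ℕ} {D : Finset ℕ} (hn : 2 ≤ n)
    (hD : ∀ d ∈ D, d + 3 < 2 ^ (n + 1) ∧ d ≠ 2 ^ n - 1) :
    IsPotential D 2 (2 * n - 1) logPotential where
  add_le_two_mul _ hx := (logPotential_two_mul hx).ge
  add_le d hd _ hx := logPotential_add_le hn hx (hD d hd).1 (hD d hd).2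

lemma two_pow_sub_three_mul_two_pow_add {k : ℕ} (hk : 1 ≤ k) :
    (2 ^ (k + 1) - 3) * 2 ^ k + (3 * 2 ^ k - 1) = 2 ^ (2 * k + 1) - 1 := by
  have hk2 : 2 ^ 1 ≤ 2 ^ k := Nat.pow_le_pow_right two_pos hk
  have hsq : 2 ^ (2 * k + 1) = 2 ^ (k + 1) * 2 ^ k := by ring
  have hle : 3 * 2 ^ k ≤ 2 ^ (k + 1) * 2 ^ k := Nat.mul_le_mul_right _ (by omega)
  rw [Nat.sub_mul, hsq]
  omega

theorem exists_isSolution_weight_eq_two {n : ℕ} {D : Finset ℕ} (hn : 2 ≤ n)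
    (ha : 2 ^ n - 3 ∈ D) (hb : 3 * 2 ^ (n - 1) - 1 ∈ D) :
    ∃ U, IsSolution D (2 * n - 1) U ∧ weight D U = 2 := by
  obtain ⟨k, rfl⟩ : ∃ k, n = k + 1 := ⟨n - 1, by omega⟩
  rw [Nat.add_sub_cancel] at hb
  have hsum := two_pow_sub_three_mul_two_pow_add (k := k) (by omega)
  have hlen : 2 * (k + 1) - 1 = 2 * k + 1 := by omega
  have hk : 2 ^ k < 2 ^ (2 * k + 1) := Nat.pow_lt_pow_right one_lt_two (by omega)
  have hne : 2 ^ (k + 1) - 3 ≠ 3 * 2 ^ k - 1 := by have := k.two_pow_pos; omega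
  refine ⟨sol2 (2 ^ (k + 1) - 3) (2 ^ k) (3 * 2 ^ k - 1) 1, ?_, ?_⟩
  · rw [hlen]
    have := k.two_pow_pos
    exact isSolution_sol2 ha hb hne (by omega) (by omega) (by omega) (by rw [mul_one, hsum])
      (by omega)
  · rw [weight_sol2 ha hb hne, s2_two_pow, show s2 1 = 1 from s2_two_pow 0]

lemma mem_oddUpTo_erase {d m e : ℕ} : e ∈ (oddUpTo d).erase m ↔ e ≠ m ∧ e ≤ d ∧ e % 2 = 1 := by
  rw [Finset.mem_erase, oddUpTo, Finset.mem_filter, Finset.mem_range, Nat.lt_succ_iff]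

lemma lt_and_ne_of_mem_oddUpTo_erase {n d e : ℕ} (hn : 1 ≤ n) (hd : d ≤ 2 ^ (n + 1) - 4)
    (he : e ∈ (oddUpTo d).erase (2 ^ n - 1)) : e + 3 < 2 ^ (n + 1) ∧ e ≠ 2 ^ n - 1 := by
  have hpow : 2 ^ 2 ≤ 2 ^ (n + 1) := Nat.pow_le_pow_right two_pos (by omega)
  obtain ⟨hne, hle, -⟩ := mem_oddUpTo_erase.1 he
  exact ⟨by omega, hne⟩

lemma two_pow_sub_three_mem_oddUpTo_erase {n d : ℕ} (hn : 2 ≤ n)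
    (hd : 3 * 2 ^ (n - 1) - 1 ≤ d) : 2 ^ n - 3 ∈ (oddUpTo d).erase (2 ^ n - 1) := by
  obtain ⟨k, rfl⟩ : ∃ k, n = k + 2 := ⟨n - 2, by omega⟩
  have hk := k.two_pow_pos
  simp only [Nat.add_succ_sub_one, pow_succ] at hd
  rw [mem_oddUpTo_erase, pow_succ, pow_succ]
  omega

lemma three_mul_two_pow_sub_one_mem_oddUpTo_erase {n d : ℕ} (hn : 2 ≤ n)
    (hd : 3 * 2 ^ (n - 1) - 1 ≤ d) :
    3 * 2 ^ (n - 1) - 1 ∈ (oddUpTo d).erase (2 ^ n - 1) := by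
  obtain ⟨k, rfl⟩ : ∃ k, n = k + 2 := ⟨n - 2, by omega⟩
  have hk := k.two_pow_pos
  rw [mem_oddUpTo_erase]
  simp only [Nat.add_succ_sub_one, pow_succ] at hd ⊢
  omega

lemma three_mul_two_pow_sub_one_le {n : ℕ} (hn : 4 ≤ n) :
    3 * 2 ^ (n - 1) - 1 ≤ 2 ^ (n + 1) - 7 := by
  obtain ⟨k, rfl⟩ : ∃ k, n = k + 4 := ⟨n - 4, by omega⟩
  have hk := k.two_pow_pos
  simp only [Nat.add_succ_sub_one, pow_succ]
  omega

theorem density_case_iv_general {n : ℕ} {D : Finset ℕ}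
    (hD : ∀ d ∈ D, d + 3 < 2 ^ (n + 1) ∧ d ≠ 2 ^ n - 1)
    (ha : 2 ^ n - 3 ∈ D) (hb : 3 * 2 ^ (n - 1) - 1 ∈ D) :
    (∀ ℓ U, IsSolution D ℓ U → 2 * ℓ ≤ (2 * n - 1) * weight D U) ∧
      ∃ ℓ U, IsSolution D ℓ U ∧ 2 * ℓ = (2 * n - 1) * weight D U := by
  have hn : 2 ≤ n := by
    have hlt := (hD _ hb).1
    by_contra! hn
    interval_cases n <;> omega
  obtain ⟨U, hU, hweight⟩ := exists_isSolution_weight_eq_two hn ha hb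
  exact ⟨fun _ _ => (isPotential_logPotential hn hD).mul_length_le_mul_weight,
    2 * n - 1, U, hU, by rw [hweight, mul_comm]⟩

/-- For `n` large enough and odd `d` with `2^{n+1} − 7 ≤ d ≤ 2^{n+1} − 5`, the
2-density of `D = {i : 1 ≤ i ≤ d, i odd} \ {2^n − 1}` is `2/(2n−1)`: every solution of
length `ℓ` satisfies `(2n−1)·s(U) ≥ 2ℓ`, and some solution attains equality. -/
theorem density_case_iv :
    ∃ N : ℕ, ∀ n : ℕ, N ≤ n → ∀ d : ℕ, d % 2 = 1 →
      2 ^ (n + 1) - 7 ≤ d → d ≤ 2 ^ (n + 1) - 5 →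
      (∀ ℓ U, IsSolution ((oddUpTo d).erase (2 ^ n - 1)) ℓ U →
        2 * ℓ ≤ (2 * n - 1) * weight ((oddUpTo d).erase (2 ^ n - 1)) U) ∧
      (∃ ℓ U, IsSolution ((oddUpTo d).erase (2 ^ n - 1)) ℓ U ∧
        2 * ℓ = (2 * n - 1) * weight ((oddUpTo d).erase (2 ^ n - 1)) U) := by
  refine ⟨4, fun n hn d _ hd₁ hd₂ => ?_⟩
  have hd : 3 * 2 ^ (n - 1) - 1 ≤ d := (three_mul_two_pow_sub_one_le hn).trans hd₁
  exact density_case_iv_general (fun _ => lt_and_ne_of_mem_oddUpTo_erase (by omega) (by omega))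
    (two_pow_sub_three_mem_oddUpTo_erase (by omega) hd)
    (three_mul_two_pow_sub_one_mem_oddUpTo_erase (by omega) hd)
end

section
/- There exists N such that for all n ≥ N the following holds. Let a ≥ 1, q = 2^a, and let f(x) = ∑_{i=0}^{g} c_{2i+1} x^{2i+1} ∈ F_q[x] with c_{2g+1} ≠ 0, where 3·2^{n−1} − 1 ≤ 2g + 1 ≤ 2^{n+1} − 5. If c_{2^n − 1} = 0, then for every m ≥ 1 the integer S_m(f) is divisible by 2^{⌈2·a·m/(2n−1)⌉} (i.e. the first slope of the associated Newton polygon is at least 2/(2n−1)). -/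
/-!
Let `M` be the degree of `L` over `𝔽₂`, `T` the Teichmüller lift and `τ` the lift of `Tr f` obtained
by applying `T` to every monomial `c x ^ d` and its conjugates. Modulo `2 ^ e` one has
`(-1) ^ Tr f = 1 - 2 τ ^ 2 ^ e`. The span of the functions `2 ^ k T ^ K`, where `K` is a sum of
`k > 0` terms `d 2 ^ j` with `d` an exponent of `f`, contains `2 τ` and is stable under
`F ↦ F ^ 2 / 2`, so it contains `2 τ ^ 2 ^ e` too. Since `∑ x, T x ^ K` vanishes unless
`2 ^ M - 1` divides `K`, it remains to show `2 M ≤ (2 n - 1) k` whenever `2 ^ M - 1` divides such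
a `K`.

Reduce the `j` modulo `M` and write the new sum as `(r + 1) (2 ^ M - 1)`. Adding its terms in
binary with initial carry `r` outputs `M` digits `1` and returns to the carry `r`. Hence the
inequality follows by telescoping from a function `V` of the carry satisfying
`V (2 y + 1) = V y + 2` and `V (r + d) ≤ V r + 2 n - 1`. Twice the binary digit sum misses the
second condition by one when `d` has `n` digits `1`; the corrections in `potential` gain this one.
-/

namespace FirstSlope

/-- Twice the number of digits `1` plus the number of blocks `100` in the binary expansion of `y`.
This is the subadditive function from which `potential` is obtained. -/
def weight (y : ℕ) : ℕ :=
  if y = 0 then 0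
  else weight (y / 2) + if y % 2 = 1 then 2 else if y % 8 = 4 then 1 else 0

theorem weight_zero : weight 0 = 0 := by
  rw [weight, if_pos rfl]

theorem weight_two_mul_add_one (y : ℕ) : weight (2 * y + 1) = weight y + 2 := by
  rw [weight, if_neg (by omega), if_pos (by omega), show (2 * y + 1) / 2 = y by omega]

theorem weight_two_mul (y : ℕ) :
    weight (2 * y) = weight y + if y % 4 = 2 then 1 else 0 := by
  rcases Nat.eq_zero_or_pos y with rfl | hy
  · simp [weight_zero]
  · rw [weight, if_neg (by omega), if_neg (by omega), Nat.mul_div_cancel_left y two_pos]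
    simp only [show 2 * y % 8 = 4 ↔ y % 4 = 2 by omega]

theorem weight_two_mul_of_odd {y : ℕ} (hy : Odd y) : weight (2 * y) = weight y := by
  rw [weight_two_mul, if_neg (by grind), add_zero]

theorem weight_one : weight 1 = 2 := by
  simpa [weight_zero] using weight_two_mul_add_one 0

theorem weight_le_weight_two_mul (y : ℕ) : weight y ≤ weight (2 * y) := by
  rw [weight_two_mul]
  omega

theorem weight_add_le (x y : ℕ) : weight (x + y) ≤ weight x + weight y := by
  induction hs : x + y using Nat.strong_induction_on generalizing x y with
  | _ s ih =>
  subst hs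
  have add_one_le (p q : ℕ) (h : p + q + 1 < x + y) :
      weight (p + q + 1) ≤ weight p + weight q + 2 := by
    have h₁ := ih _ h (p + q) 1 rfl
    have h₂ := ih (p + q) (by omega) p q rfl
    rw [weight_one] at h₁
    omega
  obtain ⟨a, rfl | rfl⟩ := Nat.even_or_odd' x <;> obtain ⟨b, rfl | rfl⟩ := Nat.even_or_odd' y
  · rcases Nat.eq_zero_or_pos (a + b) with h0 | hpos
    · simp [show a = 0 by omega, show b = 0 by omega]
    have hab := ih (a + b) (by omega) a b rfl
    rw [← mul_add, weight_two_mul, weight_two_mul a, weight_two_mul b]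
    by_cases hodd : a % 2 = 1 ∧ b % 2 = 1
    · obtain ⟨p, rfl⟩ : ∃ p, a = 2 * p + 1 := ⟨a / 2, by omega⟩
      obtain ⟨q, rfl⟩ : ∃ q, b = 2 * q + 1 := ⟨b / 2, by omega⟩
      have hpq := add_one_le p q (by omega)
      rw [show 2 * p + 1 + (2 * q + 1) = 2 * (p + q + 1) by ring, weight_two_mul,
        weight_two_mul_add_one, weight_two_mul_add_one]
      split_ifs <;> omega
    · split_ifs <;> omega
  · have hab := ih (a + b) (by omega) a b rfl
    rw [← add_assoc, ← mul_add, weight_two_mul_add_one, weight_two_mul_add_one, weight_two_mul]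
    omega
  · have hab := ih (a + b) (by omega) a b rfl
    rw [add_right_comm, ← mul_add, weight_two_mul_add_one, weight_two_mul_add_one, weight_two_mul]
    omega
  · have hab := add_one_le a b (by omega)
    rw [show 2 * a + 1 + (2 * b + 1) = 2 * (a + b + 1) by ring, weight_two_mul,
      weight_two_mul_add_one, weight_two_mul_add_one]
    split_ifs <;> omega

theorem weight_add_one_le (x : ℕ) : weight (x + 1) ≤ weight x + 2 :=
  weight_one ▸ weight_add_le x 1

theorem weight_add_add_one_le {x y : ℕ} (h : (x + y) % 4 = 1) :
    weight (x + y + 1) ≤ weight x + weight y := by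
  wlog hx : x % 2 = 0 generalizing x y
  · rw [add_comm x, add_comm (weight x)]
    exact this (by omega) (by omega)
  obtain ⟨a, rfl⟩ : ∃ a, x = 2 * a := ⟨x / 2, by omega⟩
  obtain ⟨b, rfl⟩ : ∃ b, y = 2 * b + 1 := ⟨y / 2, by omega⟩
  have hab := weight_add_le a b
  have hone := weight_add_one_le (a + b)
  rw [show 2 * a + (2 * b + 1) + 1 = 2 * (a + b + 1) by ring, weight_two_mul_add_one,
    weight_two_mul, weight_two_mul a, if_neg (by omega)]
  omega

theorem weight_le_of_lt_two_pow {e k : ℕ} (he : e < 2 ^ k) : weight e ≤ 2 * k := by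
  induction k generalizing e with
  | zero => simp [show e = 0 by omega, weight_zero]
  | succ k ih =>
    rw [pow_succ'] at he
    obtain ⟨m, rfl | rfl⟩ := Nat.even_or_odd' e
    · have hm := ih (e := m) (by omega)
      rw [weight_two_mul]
      split_ifs <;> omega
    · have hm := ih (e := m) (by omega)
      rw [weight_two_mul_add_one]
      omega

theorem weight_le_of_add_two_le_two_pow {e k : ℕ} (he : e + 2 ≤ 2 ^ (k + 1)) :
    weight e ≤ 2 * k := by
  induction k generalizing e with
  | zero => simp [show e = 0 by omega, weight_zero]
  | succ k ih =>
    rw [pow_succ'] at he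
    obtain ⟨m, rfl | rfl⟩ := Nat.even_or_odd' e
    · have hm := weight_le_of_lt_two_pow (e := m) (k := k + 1) (by omega)
      rw [weight_two_mul]
      split_ifs with hmod
      · have hm' := ih (e := m) (by rw [pow_succ'] at he ⊢; omega)
        omega
      · omega
    · have hm := ih (e := m) (by omega)
      rw [weight_two_mul_add_one]
      omega

/-- The weight, minus one when the lowest binary digit `0` of `y` stands directly to the right of a
digit `1`. It measures the carry in a binary addition that outputs only digits `1`. -/
def potential (y : ℕ) : ℕ :=
  if y % 2 = 1 then potential (y / 2) + 2
  else if y % 4 = 2 then weight (y / 4) + 1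
  else weight y

theorem potential_two_mul_add_one (y : ℕ) : potential (2 * y + 1) = potential y + 2 := by
  rw [potential, if_pos (by omega), show (2 * y + 1) / 2 = y by omega]

theorem potential_two_mul_of_even {y : ℕ} (hy : Even y) : potential (2 * y) = weight (2 * y) := by
  rw [potential, if_neg (by omega), if_neg (by grind)]

theorem potential_two_mul_of_odd {y : ℕ} (hy : Odd y) : potential (2 * y) + 1 = weight y := by
  obtain ⟨z, rfl⟩ := hy
  rw [potential, if_neg (by omega), if_pos (by omega), weight_two_mul_add_one,
    show 2 * (2 * z + 1) / 4 = z by omega]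

theorem potential_le_weight (y : ℕ) : potential y ≤ weight y := by
  induction y using Nat.strong_induction_on with
  | _ y ih =>
  obtain ⟨z, rfl | rfl⟩ := Nat.even_or_odd' y
  · rcases Nat.even_or_odd z with hz | hz
    · exact (potential_two_mul_of_even hz).le
    · have hpot := potential_two_mul_of_odd hz
      have hwt := weight_two_mul_of_odd hz
      omega
  · have hz := ih z (by omega)
    rw [potential_two_mul_add_one, weight_two_mul_add_one]
    omega

theorem weight_le_potential_add_one (y : ℕ) : weight y ≤ potential y + 1 := by
  induction y using Nat.strong_induction_on with
  | _ y ih =>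
  obtain ⟨z, rfl | rfl⟩ := Nat.even_or_odd' y
  · rcases Nat.even_or_odd z with hz | hz
    · exact (potential_two_mul_of_even hz).ge.trans (Nat.le_succ _)
    · rw [potential_two_mul_of_odd hz, weight_two_mul_of_odd hz]
  · have hz := ih z (by omega)
    rw [potential_two_mul_add_one, weight_two_mul_add_one]
    omega

theorem potential_add_le_of_odd_of_odd {x y : ℕ} (hx : Odd x) (hy : Odd y) :
    potential (x + y) + 2 ≤ weight x + weight y := by
  obtain ⟨a, rfl⟩ := hx
  obtain ⟨b, rfl⟩ := hy
  have hab := weight_add_le a b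
  have hone := weight_add_one_le (a + b)
  rw [weight_two_mul_add_one, weight_two_mul_add_one,
    show 2 * a + 1 + (2 * b + 1) = 2 * (a + b + 1) by ring]
  rcases Nat.even_or_odd (a + b + 1) with heven | hodd
  · rw [potential_two_mul_of_even heven, weight_two_mul]
    split_ifs with hmod
    · have hcarry := weight_add_add_one_le (x := a) (y := b) (by omega)
      omega
    · omega
  · have hpot := potential_two_mul_of_odd hodd
    omega

theorem potential_two_mul_add_le (x y : ℕ) :
    potential (2 * x + y) ≤ weight (2 * (2 * x)) + potential y := by
  induction y using Nat.strong_induction_on generalizing x with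
  | _ y ih =>
  have hsum := (potential_le_weight _).trans (weight_add_le (2 * x) y)
  have hmono := weight_le_weight_two_mul (2 * x)
  rcases Nat.even_or_odd x with hx | hx
  · obtain ⟨b, rfl | rfl⟩ := Nat.even_or_odd' y
    · rcases Nat.even_or_odd b with hb | hb
      · rw [potential_two_mul_of_even hb]
        omega
      · have hxb := potential_two_mul_of_odd (hx.add_odd hb)
        have hb' := potential_two_mul_of_odd hb
        have hadd := weight_add_le x b
        have hx' := weight_le_weight_two_mul x
        rw [← mul_add]
        omega
    · obtain ⟨a, rfl⟩ := hx.two_dvd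
      have hab := ih b (by omega) a
      rw [← add_assoc, ← mul_add, potential_two_mul_add_one, potential_two_mul_add_one]
      omega
  · have hy := weight_le_potential_add_one y
    rw [weight_two_mul_of_odd hx] at hsum
    rw [weight_two_mul, weight_two_mul_of_odd hx, if_pos (by grind)]
    omega

theorem potential_add_le_of_mod_four_eq_three {d : ℕ} (hd : d % 4 = 3) (r : ℕ) :
    potential (r + d) ≤ potential r + potential d := by
  rcases Nat.even_or_odd' r with ⟨a, rfl | rfl⟩
  · obtain ⟨b, rfl⟩ : ∃ b, d = 2 * b + 1 := ⟨d / 2, by omega⟩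
    rw [← add_assoc, ← mul_add, potential_two_mul_add_one, potential_two_mul_add_one]
    rcases Nat.even_or_odd a with ha | ha
    · obtain ⟨x, rfl⟩ := ha.two_dvd
      have hxb := potential_two_mul_add_le x b
      rw [potential_two_mul_of_even ha]
      omega
    · have hab := potential_add_le_of_odd_of_odd ha (show Odd b by grind)
      have ha' := potential_two_mul_of_odd ha
      have hb := weight_le_potential_add_one b
      omega
  · have hsum := potential_add_le_of_odd_of_odd (odd_two_mul_add_one a) (show Odd d by grind)
    have hr := weight_le_potential_add_one (2 * a + 1)
    have hd' := weight_le_potential_add_one d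
    omega

theorem potential_add_le_of_mod_sixteen_eq_nine {d : ℕ} (hd : d % 16 = 9) (r : ℕ) :
    potential (r + d) ≤ potential r + weight d := by
  rcases Nat.even_or_odd' r with ⟨a, rfl | rfl⟩
  · obtain ⟨b, rfl⟩ : ∃ b, d = 2 * (2 * (2 * (2 * b + 1))) + 1 := ⟨d / 16, by omega⟩
    have hb : weight (2 * (2 * (2 * (2 * b + 1))) + 1) = weight b + 5 := by
      rw [weight_two_mul_add_one, weight_two_mul, weight_two_mul_of_odd (odd_two_mul_add_one b),
        weight_two_mul_add_one, if_pos (by omega)]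
    rcases Nat.even_or_odd' a with ⟨z, rfl | rfl⟩
    · have hsum := (potential_le_weight _).trans
        (weight_add_le (2 * (2 * z)) (2 * (2 * (2 * (2 * b + 1))) + 1))
      rwa [potential_two_mul_of_even (even_two_mul z)]
    · have hz := potential_two_mul_of_odd (odd_two_mul_add_one z)
      have hsum := (potential_le_weight _).trans (weight_add_le z (2 * (2 * b + 1)))
      rw [weight_two_mul_add_one] at hz
      rw [weight_two_mul_of_odd (odd_two_mul_add_one b), weight_two_mul_add_one] at hsum
      rw [hb, show 2 * (2 * z + 1) + (2 * (2 * (2 * (2 * b + 1))) + 1) =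
        2 * (2 * (z + 2 * (2 * b + 1)) + 1) + 1 by ring, potential_two_mul_add_one,
        potential_two_mul_add_one]
      omega
  · have hsum := potential_add_le_of_odd_of_odd (odd_two_mul_add_one a) (show Odd d by grind)
    have hr := weight_le_potential_add_one (2 * a + 1)
    omega

theorem potential_add_one_le_of_add_two_le_two_pow {e k : ℕ} (he : e + 2 ≤ 2 ^ (k + 1))
    (hne : e + 1 ≠ 2 ^ k) : potential e + 1 ≤ 2 * k := by
  induction k generalizing e with
  | zero => omega
  | succ k ih =>
    rw [pow_succ'] at he hne
    obtain ⟨m, rfl | rfl⟩ := Nat.even_or_odd' e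
    · rcases Nat.even_or_odd m with hm | hm
      · obtain ⟨z, rfl⟩ := hm.two_dvd
        rw [potential_two_mul_of_even hm]
        have hz := weight_le_of_add_two_le_two_pow (e := 2 * z) (k := k) (by omega)
        rw [weight_two_mul]
        split_ifs <;> omega
      · have hm' := weight_le_of_lt_two_pow (e := m) (k := k + 1) (by omega)
        have hpot := potential_two_mul_of_odd hm
        omega
    · have hm := ih (e := m) (by omega) (by omega)
      rw [potential_two_mul_add_one]
      omega

theorem potential_add_le {n d : ℕ} (hodd : Odd d) (hle : d + 5 ≤ 2 ^ (n + 1))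
    (hne : d + 1 ≠ 2 ^ n) (r : ℕ) : potential (r + d) + 1 ≤ potential r + 2 * n := by
  obtain ⟨k, rfl⟩ : ∃ k, n = k + 2 := by
    match n with
    | 0 | 1 => grind
    | k + 2 => exact ⟨k, rfl⟩
  rw [pow_succ', pow_succ'] at hle
  rw [pow_succ', pow_succ'] at hne
  obtain ⟨m, rfl⟩ := hodd
  obtain ⟨e, rfl | rfl⟩ := Nat.even_or_odd' m
  · have he := weight_le_of_add_two_le_two_pow (e := e) (k := k) (by omega)
    have hd : weight (2 * (2 * e) + 1) = weight e + (if e % 4 = 2 then 1 else 0) + 2 := by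
      rw [weight_two_mul_add_one, weight_two_mul]
    split_ifs at hd with hmod
    · have hadd := potential_add_le_of_mod_sixteen_eq_nine
        (show (2 * (2 * e) + 1) % 16 = 9 by omega) r
      omega
    · have hadd := (potential_le_weight _).trans (weight_add_le r (2 * (2 * e) + 1))
      have hr := weight_le_potential_add_one r
      omega
  · have he := potential_add_one_le_of_add_two_le_two_pow (e := e) (k := k) (by omega) (by omega)
    have hadd := potential_add_le_of_mod_four_eq_three
      (show (2 * (2 * e + 1) + 1) % 4 = 3 by omega) r
    rw [potential_two_mul_add_one, potential_two_mul_add_one] at hadd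
    omega

section DyadicSums

variable {D J : Set ℕ}

/-- The pairs `(k, K)` such that `K` is a sum of `k` terms `d * 2 ^ j` with `d ∈ D` and `j ∈ J`.
The second components are the exponents of `x` in the `k`-th power of `∑ x ^ (d * 2 ^ j)`. -/
def dyadicSums (D J : Set ℕ) : AddSubmonoid (ℕ × ℕ) :=
  AddSubmonoid.closure {p | ∃ d ∈ D, ∃ j ∈ J, p = (1, d * 2 ^ j)}

theorem mem_dyadicSums_of_mem {d j : ℕ} (hd : d ∈ D) (hj : j ∈ J) :
    (1, d * 2 ^ j) ∈ dyadicSums D J :=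
  AddSubmonoid.subset_closure ⟨d, hd, j, hj, rfl⟩

theorem dyadicSums_two_mul {p : ℕ × ℕ} (hp : p ∈ dyadicSums D .univ) :
    (p.1, 2 * p.2) ∈ dyadicSums D .univ := by
  induction hp using AddSubmonoid.closure_induction with
  | mem p hp =>
    obtain ⟨d, hd, j, -, rfl⟩ := hp
    rw [show 2 * (d * 2 ^ j) = d * 2 ^ (j + 1) by ring]
    exact mem_dyadicSums_of_mem hd trivial
  | zero => exact zero_mem _
  | add p q _ _ hp hq => simpa [mul_add] using add_mem hp hq

theorem dyadicSums_fst_le_snd (hD : ∀ d ∈ D, 0 < d) {p : ℕ × ℕ} (hp : p ∈ dyadicSums D J) :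
    p.1 ≤ p.2 := by
  induction hp using AddSubmonoid.closure_induction with
  | mem p hp =>
    obtain ⟨d, hd, j, -, rfl⟩ := hp
    exact Nat.mul_pos (hD d hd) (Nat.two_pow_pos j)
  | zero => exact le_rfl
  | add p q _ _ hp hq => exact add_le_add hp hq

theorem exists_mem_dyadicSums_Iio_modEq {M : ℕ} (hM : 0 < M) {p : ℕ × ℕ}
    (hp : p ∈ dyadicSums D .univ) :
    ∃ K, (p.1, K) ∈ dyadicSums D (.Iio M) ∧ K ≡ p.2 [MOD 2 ^ M - 1] := by
  induction hp using AddSubmonoid.closure_induction with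
  | mem p hp =>
    obtain ⟨d, hd, j, -, rfl⟩ := hp
    refine ⟨d * 2 ^ (j % M), mem_dyadicSums_of_mem hd (Nat.mod_lt j hM), ?_⟩
    have hone : 2 ^ M ≡ 1 [MOD 2 ^ M - 1] :=
      ((Nat.modEq_iff_dvd' Nat.one_le_two_pow).2 dvd_rfl).symm
    have hperiod : 2 ^ j ≡ 2 ^ (j % M) [MOD 2 ^ M - 1] := by
      conv_lhs => rw [← Nat.mod_add_div j M, pow_add, pow_mul]
      simpa using (hone.pow (j / M)).mul_left (2 ^ (j % M))
    exact hperiod.symm.mul_left d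
  | zero => exact ⟨0, zero_mem _, rfl⟩
  | add p q _ _ hp hq =>
    obtain ⟨K, hK, hKp⟩ := hp
    obtain ⟨L, hL, hLq⟩ := hq
    exact ⟨K + L, add_mem hK hL, hKp.add hLq⟩

theorem exists_add_eq_of_mem_dyadicSums_Iio_succ {M : ℕ} {p : ℕ × ℕ}
    (hp : p ∈ dyadicSums D (.Iio (M + 1))) :
    ∃ s ∈ dyadicSums D {0}, ∃ t ∈ dyadicSums D (.Iio M), p = s + (t.1, 2 * t.2) := by
  induction hp using AddSubmonoid.closure_induction with
  | mem p hp =>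
    obtain ⟨d, hd, j | j, hj, rfl⟩ := hp
    · exact ⟨_, mem_dyadicSums_of_mem hd rfl, 0, zero_mem _, rfl⟩
    · refine ⟨0, zero_mem _, _, mem_dyadicSums_of_mem hd (Nat.lt_of_succ_lt_succ hj), ?_⟩
      simp only [zero_add, Prod.mk.injEq, true_and]
      ring
  | zero => exact ⟨0, zero_mem _, 0, zero_mem _, rfl⟩
  | add p q _ _ hp hq =>
    obtain ⟨s, hs, t, ht, rfl⟩ := hp
    obtain ⟨s', hs', t', ht', rfl⟩ := hq
    refine ⟨s + s', add_mem hs hs', t + t', add_mem ht ht', ?_⟩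
    ext <;> simp only [Prod.fst_add, Prod.snd_add] <;> ring

variable {V : ℕ → ℕ} {A B : ℕ} (hadd : ∀ d ∈ D, ∀ r, V (r + d) ≤ V r + B)
include hadd

theorem le_add_of_mem_dyadicSums_singleton_zero {p : ℕ × ℕ} (hp : p ∈ dyadicSums D {0}) (r : ℕ) :
    V (r + p.2) ≤ V r + B * p.1 := by
  induction hp using AddSubmonoid.closure_induction generalizing r with
  | mem p hp =>
    obtain ⟨d, hd, _, rfl, rfl⟩ := hp
    simpa using hadd d hd r
  | zero => exact le_rfl
  | add p q _ _ hp hq =>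
    have hrp := hp r
    have hrq := hq (r + p.2)
    simp only [Prod.fst_add, Prod.snd_add, ← add_assoc, mul_add]
    omega

variable (hodd : ∀ y, V y + A ≤ V (2 * y + 1))
include hodd

theorem mul_add_le_of_mem_dyadicSums_Iio {M : ℕ} {p : ℕ × ℕ} (hp : p ∈ dyadicSums D (.Iio M))
    {r s : ℕ} (hrs : r + p.2 + 1 = (s + 1) * 2 ^ M) : A * M + V s ≤ V r + B * p.1 := by
  induction M generalizing p r with
  | zero =>
    obtain rfl : p = 0 := by simpa [dyadicSums] using hp
    obtain rfl : r = s := by simpa using hrs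
    simp
  | succ M ih =>
    obtain ⟨u, hu, t, ht, rfl⟩ := exists_add_eq_of_mem_dyadicSums_Iio_succ hp
    simp only [Prod.fst_add, Prod.snd_add] at hrs ⊢
    rw [pow_succ', mul_left_comm] at hrs
    obtain ⟨y, hy⟩ : ∃ y, r + u.2 = 2 * y + 1 := ⟨(r + u.2) / 2, by omega⟩
    have hlow := le_add_of_mem_dyadicSums_singleton_zero hadd hu r
    have hhigh := ih ht (r := y) (by omega)
    have hshift := hodd y
    rw [hy] at hlow
    rw [mul_add, mul_add]
    omega

theorem mul_le_mul_of_mem_dyadicSums (hD : ∀ d ∈ D, 0 < d) {M : ℕ} {p : ℕ × ℕ}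
    (hp : p ∈ dyadicSums D .univ) (hpos : 0 < p.1) (hdvd : 2 ^ M - 1 ∣ p.2) :
    A * M ≤ B * p.1 := by
  rcases Nat.eq_zero_or_pos M with rfl | hM
  · simp
  obtain ⟨K, hK, hmod⟩ := exists_mem_dyadicSums_Iio_modEq hM hp
  obtain ⟨t, rfl⟩ := (hmod.dvd_iff dvd_rfl).2 hdvd
  have hKpos : 0 < (2 ^ M - 1) * t := hpos.trans_le (dyadicSums_fst_le_snd hD hK)
  obtain ⟨r, rfl⟩ := Nat.exists_eq_succ_of_ne_zero (Nat.pos_of_mul_pos_left hKpos).ne'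
  have hcycle : r + (2 ^ M - 1) * (r + 1) + 1 = (r + 1) * 2 ^ M := by
    rw [Nat.sub_one_mul, mul_comm (2 ^ M)]
    have hle := Nat.le_mul_of_pos_right (r + 1) (Nat.two_pow_pos M)
    omega
  have hbound := mul_add_le_of_mem_dyadicSums_Iio hadd hodd hK hcycle
  exact le_of_add_le_add_right (hbound.trans_eq (add_comm (V r) _))

end DyadicSums

section DyadicSpan

variable (R : Type*) {A : Type*} [CommRing R] [CommRing A] [Algebra R A] (D : Set ℕ) (t : A)

/-- The span of the monomials `2 ^ k * t ^ K`, where `K` is a sum of `k > 0` terms `d * 2 ^ j` with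
`d ∈ D`. The factors `2 ^ k` with `k > 0` make it stable under `a ↦ a ^ 2 / 2`. -/
def dyadicSpan : Submodule R A :=
  Submodule.span R {a | ∃ p ∈ dyadicSums D .univ, 0 < p.1 ∧ a = 2 ^ p.1 * t ^ p.2}

variable {R D t}

theorem mul_mem_dyadicSpan {a b : A} (ha : a ∈ dyadicSpan R D t) (hb : b ∈ dyadicSpan R D t) :
    a * b ∈ dyadicSpan R D t := by
  have hab := Submodule.mul_mem_mul ha hb
  rw [dyadicSpan, Submodule.span_mul_span] at hab
  refine Submodule.span_mono ?_ hab
  rintro _ ⟨_, ⟨p, hp, hp', rfl⟩, _, ⟨q, hq, -, rfl⟩, rfl⟩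
  refine ⟨p + q, add_mem hp hq, Nat.add_pos_left hp' q.1, ?_⟩
  simp only [Prod.fst_add, Prod.snd_add]
  ring

theorem exists_mem_dyadicSpan_mul_self_eq {a : A} (ha : a ∈ dyadicSpan R D t) :
    ∃ b ∈ dyadicSpan R D t, a * a = 2 * b := by
  induction ha using Submodule.span_induction with
  | mem a ha =>
    obtain ⟨⟨k, K⟩, hp, hk, rfl⟩ := ha
    obtain ⟨l, rfl : k = l + 1⟩ := Nat.exists_eq_succ_of_ne_zero hk.ne'
    refine ⟨(2 : R) ^ l • (2 ^ (l + 1) * t ^ (2 * K)),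
      Submodule.smul_mem _ _ (Submodule.subset_span ⟨_, dyadicSums_two_mul hp, hk, rfl⟩), ?_⟩
    simp only [Algebra.smul_def, map_pow, map_ofNat]
    ring
  | zero => exact ⟨0, zero_mem _, by simp⟩
  | add a b ha hb ha' hb' =>
    obtain ⟨a', ha', haa⟩ := ha'
    obtain ⟨b', hb', hbb⟩ := hb'
    refine ⟨a' + b' + a * b, add_mem (add_mem ha' hb') (mul_mem_dyadicSpan ha hb), ?_⟩
    linear_combination haa + hbb
  | smul r a _ ha' =>
    obtain ⟨a', ha', haa⟩ := ha'
    exact ⟨(r * r) • a', Submodule.smul_mem _ _ ha', by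
      rw [smul_mul_smul_comm, haa, mul_smul_comm]⟩

theorem two_mul_pow_two_pow_mem_dyadicSpan (h2 : IsLeftRegular (2 : A)) {a : A}
    (ha : 2 * a ∈ dyadicSpan R D t) (N : ℕ) : 2 * a ^ 2 ^ N ∈ dyadicSpan R D t := by
  induction N with
  | zero => simpa using ha
  | succ N ih =>
    obtain ⟨b, hb, hsq⟩ := exists_mem_dyadicSpan_mul_self_eq ih
    have hb' : b = 2 * a ^ 2 ^ (N + 1) := h2 <| by
      simp only [← hsq, pow_succ 2 N, pow_mul]
      ring
    rwa [← hb']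

end DyadicSpan

section FiniteField

variable {L : Type*} [Field L] [Fintype L]

theorem sum_pow_eq_zero {R : Type*} [CommRing R] [IsDomain R] {T : L →* R}
    (hT : Function.Injective T) {K : ℕ} (hK : ¬ Fintype.card L - 1 ∣ K) :
    ∑ x, T x ^ K = 0 := by
  obtain ⟨u, hu⟩ := not_forall.1 (mt (FiniteField.forall_pow_eq_one_iff L K).1 hK)
  have hTu : T u ^ K ≠ 1 := by
    rw [← map_pow, ← map_one T, hT.ne_iff]
    exact fun h => hu (Units.ext h)
  have hshift : T u ^ K * ∑ x, T x ^ K = ∑ x, T x ^ K := by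
    simp only [Finset.mul_sum, ← mul_pow, ← map_mul]
    exact Fintype.sum_equiv (Equiv.mulLeft₀ (u : L) u.ne_zero) _ _ fun _ => rfl
  exact eq_zero_of_mul_eq_self_left hTu hshift

theorem two_pow_dvd_sum_of_mem_dyadicSpan {R : Type*} [CommRing R] [IsDomain R] {T : L →* R}
    (hT : Function.Injective T) {D : Set ℕ} {e : ℕ}
    (he : ∀ p ∈ dyadicSums D .univ, 0 < p.1 → Fintype.card L - 1 ∣ p.2 → e ≤ p.1)
    {F : L → R} (hF : F ∈ dyadicSpan R D ⇑T) : 2 ^ e ∣ ∑ x, F x := by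
  induction hF using Submodule.span_induction with
  | mem F hF =>
    obtain ⟨p, hp, hpos, rfl⟩ := hF
    simp only [Pi.mul_apply, Pi.pow_apply, Pi.ofNat_apply, ← Finset.mul_sum]
    by_cases hdvd : Fintype.card L - 1 ∣ p.2
    · exact (pow_dvd_pow 2 (he p hp hpos hdvd)).mul_right _
    · rw [sum_pow_eq_zero hT hdvd, mul_zero]
      exact dvd_zero _
  | zero => simp
  | add F G _ _ hF hG =>
    simp only [Pi.add_apply, Finset.sum_add_distrib]
    exact dvd_add hF hG
  | smul r F _ hF =>
    simp only [Pi.smul_apply, smul_eq_mul, ← Finset.mul_sum]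
    exact hF.mul_left r

end FiniteField

theorem pow_dvd_of_pow_dvd_intCast {R S : Type*} [CommRing R] [IsDomain R] [Ring S] {p : ℕ}
    [CharP S p] (π : R →+* S) (hp : (p : R) ≠ 0) {e : ℕ} {z : ℤ} (h : (p : R) ^ e ∣ z) :
    (p : ℤ) ^ e ∣ z := by
  induction e generalizing z with
  | zero => simp
  | succ e ih =>
    have hz : (p : ℤ) ∣ z := by
      obtain ⟨w, hw⟩ := (dvd_pow_self (p : R) e.succ_ne_zero).trans h
      rw [← CharP.intCast_eq_zero_iff S p, ← map_intCast π, hw, map_mul, map_natCast,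
        CharP.cast_eq_zero, zero_mul]
    obtain ⟨y, rfl⟩ := hz
    rw [pow_succ'] at h ⊢
    push_cast at h
    exact mul_dvd_mul_left _ (ih ((mul_dvd_mul_iff_left hp).1 h))

theorem leftInverse_constantCoeff_teichmuller (p : ℕ) [Fact p.Prime] (R : Type*) [CommRing R] :
    Function.LeftInverse WittVector.constantCoeff (WittVector.teichmuller p (R := R)) :=
  WittVector.teichmuller_coeff_zero p

section Trace

open Polynomial

variable {L : Type*} [Field L] [Algebra (ZMod 2) L]

/-- The lift to Witt vectors of the function `x ↦ Tr (f x)`, given by the formula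
`Tr y = ∑ y ^ 2 ^ j` applied to the Teichmüller representatives of the monomials of `f`. -/
noncomputable def traceLift (f : L[X]) (x : L) : WittVector 2 L :=
  ∑ d ∈ f.support, ∑ j ∈ Finset.range (Module.finrank (ZMod 2) L),
    WittVector.teichmuller 2 (f.coeff d * x ^ d) ^ 2 ^ j

theorem two_mul_traceLift_mem_dyadicSpan (f : L[X]) :
    2 * traceLift f ∈ dyadicSpan (WittVector 2 L) f.support ⇑(WittVector.teichmuller 2) := by
  have hsum : 2 * traceLift f = ∑ d ∈ f.support,
      ∑ j ∈ Finset.range (Module.finrank (ZMod 2) L), WittVector.teichmuller 2 (f.coeff d) ^ 2 ^ j •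
        (2 ^ 1 * ⇑(WittVector.teichmuller 2) ^ (d * 2 ^ j)) := by
    funext x
    simp only [traceLift, Pi.mul_apply, Pi.ofNat_apply, Pi.pow_apply, Pi.smul_apply, smul_eq_mul,
      Finset.sum_apply, Finset.mul_sum, map_mul, map_pow]
    refine Finset.sum_congr rfl fun d _ => Finset.sum_congr rfl fun j _ => ?_
    ring
  rw [hsum]
  exact sum_mem fun d hd => sum_mem fun j _ => Submodule.smul_mem _ _ <|
    Submodule.subset_span ⟨_, mem_dyadicSums_of_mem hd trivial, one_pos, rfl⟩

variable [Finite L]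

theorem constantCoeff_traceLift (f : L[X]) (x : L) :
    WittVector.constantCoeff (traceLift f x) =
      algebraMap (ZMod 2) L (Algebra.trace (ZMod 2) L (f.eval x)) := by
  simp only [traceLift, map_sum, map_pow, leftInverse_constantCoeff_teichmuller 2 L _,
    FiniteField.algebraMap_trace_eq_sum_pow, Nat.card_zmod, eval_eq_sum, Polynomial.sum]

theorem charP_two (L : Type*) [Field L] [Algebra (ZMod 2) L] : CharP L 2 :=
  (Algebra.charP_iff (ZMod 2) L 2).1 inferInstance

theorem two_dvd_of_constantCoeff_eq_zero {z : WittVector 2 L}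
    (hz : WittVector.constantCoeff z = 0) : 2 ∣ z := by
  have := charP_two L
  have hmem := (WittVector.mem_span_p_iff_coeff_zero_eq_zero z).2 hz
  exact_mod_cast Ideal.mem_span_singleton.1 hmem

theorem two_dvd_traceLift_sub (f : L[X]) (x : L) :
    2 ∣ traceLift f x - ((Algebra.trace (ZMod 2) L (f.eval x)).val : WittVector 2 L) := by
  refine two_dvd_of_constantCoeff_eq_zero ?_
  rw [map_sub, map_natCast, constantCoeff_traceLift, ← map_natCast (algebraMap (ZMod 2) L),
    ZMod.natCast_zmod_val, sub_self]

theorem two_pow_dvd_traceLift_pow_sub (f : L[X]) (x : L) (e : ℕ) :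
    2 ^ e ∣ traceLift f x ^ 2 ^ e -
      ((Algebra.trace (ZMod 2) L (f.eval x)).val : WittVector 2 L) := by
  have hpow := dvd_sub_pow_of_dvd_sub (p := 2) (mod_cast two_dvd_traceLift_sub f x) e
  have hbit (c : ZMod 2) : (c.val : WittVector 2 L) ^ 2 ^ e = c.val := by
    fin_cases c <;> simp [ZMod.val]
  rw [hbit] at hpow
  exact (pow_dvd_pow _ e.le_succ).trans (mod_cast hpow)

theorem two_pow_dvd_sum_neg_one_pow_trace {L : Type*} [Field L] [Fintype L] [Algebra (ZMod 2) L]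
    (f : L[X]) {e : ℕ} (he : e ≤ Module.finrank (ZMod 2) L)
    (hf : ∀ p ∈ dyadicSums f.support .univ, 0 < p.1 → Fintype.card L - 1 ∣ p.2 → e ≤ p.1) :
    2 ^ e ∣ ∑ x, (-1 : ℤ) ^ (Algebra.trace (ZMod 2) L (f.eval x)).val := by
  have := charP_two L
  set b : L → ℕ := fun x => (Algebra.trace (ZMod 2) L (f.eval x)).val with hb
  have h2 : (2 : WittVector 2 L) ≠ 0 := mod_cast WittVector.p_nonzero 2 L
  have hreg : IsLeftRegular (2 : L → WittVector 2 L) := fun F G hFG =>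
    funext fun x => mul_left_cancel₀ h2 (congrFun hFG x)
  have hlift : 2 ^ e ∣ ∑ x, 2 * traceLift f x ^ 2 ^ e :=
    two_pow_dvd_sum_of_mem_dyadicSpan
      (leftInverse_constantCoeff_teichmuller 2 L).injective hf
      (two_mul_pow_two_pow_mem_dyadicSpan hreg (two_mul_traceLift_mem_dyadicSpan f) e)
  have hsign (c : ZMod 2) : (-1 : WittVector 2 L) ^ c.val = 1 - 2 * c.val := by
    fin_cases c <;> norm_num [ZMod.val]
  have hcard : (2 : WittVector 2 L) ^ e ∣ Fintype.card L := by
    rw [← FiniteField.pow_finrank_eq_card 2 L]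
    exact_mod_cast pow_dvd_pow (2 : WittVector 2 L) he
  have hsum : ((∑ x, (-1 : ℤ) ^ b x : ℤ) : WittVector 2 L) = Fintype.card L -
      ∑ x, 2 * traceLift f x ^ 2 ^ e + ∑ x, 2 * (traceLift f x ^ 2 ^ e - b x) := by
    push_cast
    simp [hb, hsign, mul_sub]
  refine pow_dvd_of_pow_dvd_intCast (p := 2) WittVector.constantCoeff (mod_cast h2) ?_
  rw [hsum]
  exact_mod_cast (hcard.sub hlift).add (Finset.dvd_sum fun x _ =>
    (two_pow_dvd_traceLift_pow_sub f x e).mul_left 2)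

end Trace

section OddPolynomial

open Polynomial

variable {R : Type*} [CommSemiring R] (g : ℕ) (c : ℕ → R)

/-- The polynomial `∑ c_{2i+1} x^{2i+1}` with `0 ≤ i ≤ g` defining a hyperelliptic curve of 2-rank
`0`. Only the odd-indexed values of `c` matter. -/
noncomputable def oddPolynomial : R[X] :=
  ∑ i ∈ Finset.range (g + 1), C (c (2 * i + 1)) * X ^ (2 * i + 1)

theorem eval_oddPolynomial (x : R) :
    (oddPolynomial g c).eval x = ∑ i ∈ Finset.range (g + 1), c (2 * i + 1) * x ^ (2 * i + 1) := by
  simp [oddPolynomial, eval_finsetSum]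

theorem coeff_oddPolynomial (d : ℕ) :
    (oddPolynomial g c).coeff d = if Odd d ∧ d ≤ 2 * g + 1 then c d else 0 := by
  simp only [oddPolynomial, finsetSum_coeff, coeff_C_mul_X_pow]
  split_ifs with hd
  · obtain ⟨⟨i, rfl⟩, hi⟩ := hd
    rw [Finset.sum_eq_single i] <;> grind
  · exact Finset.sum_eq_zero fun i hi => if_neg (by grind)

theorem natDegree_oddPolynomial_le : (oddPolynomial g c).natDegree ≤ 2 * g + 1 :=
  natDegree_le_iff_coeff_eq_zero.2 fun d hd => by
    rw [coeff_oddPolynomial, if_neg (by omega)]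

theorem odd_of_mem_support_oddPolynomial {d : ℕ} (hd : d ∈ (oddPolynomial g c).support) :
    Odd d := by
  rw [mem_support_iff, coeff_oddPolynomial] at hd
  exact (ite_ne_right_iff.1 hd).1.1

end OddPolynomial

theorem finrank_zmod_eq_mul_finrank {p a : ℕ} [Fact p.Prime] {K L : Type*} [Field K] [Fintype K]
    [Field L] [Finite L] [Algebra K L] [Algebra (ZMod p) L] (hK : Fintype.card K = p ^ a) :
    Module.finrank (ZMod p) L = a * Module.finrank K L := by
  refine Nat.pow_right_injective (Fact.out : p.Prime).two_le ?_
  calc p ^ Module.finrank (ZMod p) L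
      = Nat.card L := FiniteField.pow_finrank_eq_natCard p L
    _ = Nat.card K ^ Module.finrank K L := Module.natCard_eq_pow_finrank
    _ = p ^ (a * Module.finrank K L) := by rw [Nat.card_eq_fintype_card, hK, pow_mul]

theorem ceil_two_mul_div_le {n M k : ℕ} (hn : 0 < n) (h : 2 * M ≤ (2 * n - 1) * k) :
    ⌈(2 * M : ℚ) / (2 * n - 1)⌉₊ ≤ k := by
  obtain ⟨n, rfl⟩ := Nat.exists_eq_succ_of_ne_zero hn.ne'
  have hden : (2 * (n + 1 : ℕ) - 1 : ℚ) = (2 * n + 1 : ℕ) := by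
    push_cast
    ring
  rw [Nat.ceil_le, hden, div_le_iff₀' (by positivity)]
  exact_mod_cast h

end FirstSlope

open Polynomial in
theorem first_slope_case_ii_general {n : ℕ} (hn : 2 ≤ n) {L : Type*} [Field L] [Fintype L]
    [Algebra (ZMod 2) L] (f : L[X]) (hdeg : f.natDegree + 5 ≤ 2 ^ (n + 1))
    (hodd : ∀ d ∈ f.support, Odd d) (hcoeff : f.coeff (2 ^ n - 1) = 0) :
    2 ^ ⌈(2 * Module.finrank (ZMod 2) L : ℚ) / (2 * n - 1)⌉₊ ∣
      ∑ x, (-1 : ℤ) ^ (Algebra.trace (ZMod 2) L (f.eval x)).val := by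
  have hstep (d : ℕ) (hd : d ∈ f.support) (r : ℕ) :
      FirstSlope.potential (r + d) ≤ FirstSlope.potential r + (2 * n - 1) := by
    have hle := le_natDegree_of_mem_supp d hd
    have hne : d + 1 ≠ 2 ^ n := fun h => mem_support_iff.1 hd (by rwa [← h] at hcoeff)
    have hadd := FirstSlope.potential_add_le (hodd d hd) (by omega) hne r
    omega
  refine FirstSlope.two_pow_dvd_sum_neg_one_pow_trace f
    (FirstSlope.ceil_two_mul_div_le (by omega) (Nat.mul_le_mul_right _ (by omega)))
    fun p hp hpos hdvd => FirstSlope.ceil_two_mul_div_le (by omega) ?_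
  rw [← FiniteField.pow_finrank_eq_card 2 L] at hdvd
  exact FirstSlope.mul_le_mul_of_mem_dyadicSums hstep
    (fun y => (FirstSlope.potential_two_mul_add_one y).ge) (fun d hd => (hodd d hd).pos)
    hp hpos hdvd

/-- For `n` large enough: let `q = 2^a` (`a ≥ 1`), `K` a field with `q` elements,
`f(x) = ∑_{i=0}^g c_{2i+1} x^{2i+1} ∈ K[x]` with `c_{2g+1} ≠ 0` and
`3·2^{n−1} − 1 ≤ 2g + 1 ≤ 2^{n+1} − 5`.  If `c_{2^n−1} = 0`, then for every `m ≥ 1` and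
every degree-`m` extension `L/K`, the exponential sum
`S_m(f) = ∑_{x ∈ L} (−1)^{Tr_{L/F₂}(f(x))}` is divisible by `2^{⌈2·a·m/(2n−1)⌉}`
(first slope at least `2/(2n−1)`).  (The `F₂ = ZMod 2`-algebra structure on `L` is
unique since `L` has characteristic 2.) -/
theorem first_slope_case_ii :
    ∃ N : ℕ, ∀ n : ℕ, N ≤ n → ∀ a : ℕ, 1 ≤ a →
      ∀ (K : Type) [Field K] [Fintype K], Fintype.card K = 2 ^ a →
      ∀ g : ℕ, 3 * 2 ^ (n - 1) - 1 ≤ 2 * g + 1 → 2 * g + 1 ≤ 2 ^ (n + 1) - 5 →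
      ∀ c : ℕ → K, c (2 * g + 1) ≠ 0 → c (2 ^ n - 1) = 0 →
      ∀ m : ℕ, 1 ≤ m →
      ∀ (L : Type) [Field L] [Fintype L] [Algebra K L] [Algebra (ZMod 2) L],
        Module.finrank K L = m →
        (2 : ℤ) ^ (⌈(2 * a * m : ℚ) / (2 * (n : ℚ) - 1)⌉₊) ∣
          ∑ x : L, (-1 : ℤ) ^
            (Algebra.trace (ZMod 2) L
              (∑ i ∈ Finset.range (g + 1),
                algebraMap K L (c (2 * i + 1)) * x ^ (2 * i + 1))).val := by
  refine ⟨2, fun n hn a _ K _ _ hK g _ hg c _ hc m _ L _ _ _ _ hm => ?_⟩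
  have hdvd := first_slope_case_ii_general hn
    (FirstSlope.oddPolynomial g fun i => algebraMap K L (c i))
    ((Nat.add_le_add_right (FirstSlope.natDegree_oddPolynomial_le g _) 5).trans (by omega))
    (fun _ => FirstSlope.odd_of_mem_support_oddPolynomial g _)
    (by simp [FirstSlope.coeff_oddPolynomial, hc])
  rw [FirstSlope.finrank_zmod_eq_mul_finrank hK, hm] at hdvd
  simpa [FirstSlope.eval_oddPolynomial, ← mul_assoc] using hdvd
end

section
/- There exists N such that for all n ≥ N the following holds. Let a ≥ 1, q = 2^a, and let f(x) = ∑_{i=0}^{g} c_{2i+1} x^{2i+1} ∈ F_q[x] with c_{2g+1} ≠ 0, where 2g + 1 = 2^{n+1} − 3. If c_{2^n − 1} = 0 and c_{3·2^{n−1} − 1} = 0, then for every m ≥ 1 the integer S_m(f) is divisible by 2^{⌈2·a·m/(2n−1)⌉} (i.e. the first slope of the associated Newton polygon is at least 2/(2n−1)). -/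
/-!
Let `q = 2 ^ k` be the size of the field. Modulo `2 ^ E`, the sign `(-1) ^ Tr y` equals
`1 - 2 * T ^ 2 ^ E`, where `T` is the sum of the Teichmüller representatives of the terms of the
trace. When `T ^ 2 ^ E` is expanded and summed over the field, a monomial contributes only if
`2 ^ k - 1` divides its exponent, and by Legendre's formula the valuation of its multinomial
coefficient is governed by the binary digits of the multiplicities. Hence `2 ^ E` divides the
exponential sum as soon as every relation `2 ^ k - 1 ∣ ∑ t, 2 ^ r t * d t` between the exponents
of `f` has at least `E` terms (Moreno and Moreno).

To bound from below the number `X` of terms of a relation, add them in base `2` with end-around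
carry, over columns indexed by `ℤ/k`. All carries are positive; let `W` be the sum of their
excesses over `1`. The total number of digits `1` is `k + W`, and no exponent has more than `n`
of them: let `δ` be the total number of digits by which the exponents fall short of `n`. Then
`k + W + δ = n * X`, so that `2 * k ≤ (2 * n - 1) * X` is equivalent to `X ≤ 2 * W + 2 * δ`.
There are at most `δ` terms with fewer than `n` digits. The terms with `n` digits miss exactly one
of the digits `0, …, n`, which by the vanishing of the two coefficients is none of the digits
`0`, `n - 1`, `n`. If such a term meets a column with an excess carry, it is charged to `W`,
giving at most `2 * W` terms; otherwise the column of its missing digit is filled by a digit of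
another term, whose neighboring digits have to vanish, and it is charged to that term, giving at
most `δ` terms.
-/

open Finset

section CyclicCarry

variable {b k : ℕ}

lemma pow_modEq_pow_of_natCast_eq (hb : 0 < b) {e e' : ℕ} (h : (e : ZMod k) = e') :
    b ^ e ≡ b ^ e' [MOD b ^ k - 1] := by
  rw [← ZMod.natCast_eq_natCast_iff]
  push_cast
  refine pow_eq_pow_of_modEq ((ZMod.natCast_eq_natCast_iff _ _ _).1 h) ?_
  have := ZMod.natCast_self (b ^ k - 1)
  rw [Nat.cast_sub (Nat.one_le_pow _ _ hb)] at this
  push_cast at this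
  exact sub_eq_zero.1 this

variable [NeZero k]

lemma val_sub_one_add_one (y : ZMod k) : (y - 1).val + 1 = if y = 0 then k else y.val := by
  obtain ⟨k, rfl⟩ := Nat.exists_eq_succ_of_ne_zero (NeZero.ne k)
  split_ifs with hy
  · rw [hy, zero_sub, ZMod.val_neg_one]
  · have hpos : 0 < y.val := Nat.pos_of_ne_zero (by simpa using hy)
    have hlt := ZMod.val_lt y
    have : Fact (1 < k.succ) := ⟨by omega⟩
    have hone : (1 : ZMod k.succ).val = 1 := ZMod.val_one _
    rw [ZMod.val_sub (by omega), hone]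
    omega

lemma mul_pow_val_sub_add_one (hb : 0 < b) (x q : ZMod k) :
    b * b ^ (x - (q + 1)).val = b ^ (x - q).val + if x = q then b ^ k - 1 else 0 := by
  rw [← pow_succ', ← sub_sub, val_sub_one_add_one]
  simp only [sub_eq_zero]
  split_ifs with h
  · subst h
    have := Nat.one_le_pow k b hb
    simp
    omega
  · rfl

/-- `w q` is the carry into column `q` when the `b ^ e p` are added in base `b` with end-around
carry. -/
theorem exists_cyclic_carry (hb : 1 < b) {β : Type*} {s : Finset β} (hs : s.Nonempty) {e : β → ℕ}
    (hdvd : b ^ k - 1 ∣ ∑ p ∈ s, b ^ e p) :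
    ∃ w : ZMod k → ℕ, ∀ q, 0 < w q ∧ b * w (q + 1) = w q + #{p ∈ s | (e p : ZMod k) = q} := by
  have hQ : 0 < b ^ k - 1 := Nat.sub_pos_of_lt (Nat.one_lt_pow (NeZero.ne k) hb)
  let X (q : ZMod k) : ℕ := ∑ p ∈ s, b ^ ((e p : ZMod k) - q).val
  have hX (q : ZMod k) : b ^ k - 1 ∣ X q := by
    have hcop : (b ^ k - 1).Coprime (b ^ q.val) :=
      .pow_right _ <| (Nat.coprime_pow_right_iff (NeZero.pos k) _ _).1 <|
        (Nat.coprime_self_sub_left (Nat.one_le_pow _ _ (by omega))).2 (Nat.coprime_one_left _)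
    refine hcop.dvd_of_dvd_mul_left <| ((Nat.ModEq.dvd_iff ?_ dvd_rfl).2 hdvd)
    rw [mul_sum]
    refine Nat.ModEq.sum fun p _ => ?_
    rw [← pow_add]
    exact pow_modEq_pow_of_natCast_eq (by omega) (by simp)
  choose w hw using hX
  refine ⟨w, fun q => ⟨Nat.pos_of_ne_zero fun h => ?_, ?_⟩⟩
  · have : 0 < X q := sum_pos (fun p _ => by positivity) hs
    simp [hw, h] at this
  · have hstep : b * X (q + 1) = X q + (b ^ k - 1) * #{p ∈ s | (e p : ZMod k) = q} := by
      simp only [X, mul_sum, mul_pow_val_sub_add_one (zero_lt_one.trans hb), sum_add_distrib,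
        ← sum_filter, sum_const, smul_eq_mul, mul_comm]
    rw [hw, hw] at hstep
    refine Nat.eq_of_mul_eq_mul_left hQ ?_
    linarith

end CyclicCarry

/-- An abstraction of the binary supports of the exponents: patterns in `{0, …, n}` which contain
`0` and have at most `n` elements, the only element missing from a pattern with `n` elements being
different from `n` and `n - 1`. -/
structure AdmissiblePattern (n : ℕ) (s : Finset ℕ) : Prop where
  zero_mem : 0 ∈ s
  subset_range : s ⊆ range (n + 1)
  card_le : #s ≤ n
  top_mem : #s = n → n ∈ s
  pred_top_mem : #s = n → n - 1 ∈ s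

namespace AdmissiblePattern

variable {n : ℕ} {s : Finset ℕ}

lemma card_range_sdiff (hs : AdmissiblePattern n s) : #(range (n + 1) \ s) = n + 1 - #s := by
  rw [card_sdiff_of_subset hs.subset_range, card_range]

lemma exists_eq_erase (hs : AdmissiblePattern n s) (hcard : #s = n) :
    ∃ j, 0 < j ∧ j + 2 ≤ n ∧ s = (range (n + 1)).erase j := by
  obtain ⟨j, hj⟩ : ∃ j, range (n + 1) \ s = {j} := by
    rw [← card_eq_one, hs.card_range_sdiff]
    omega
  have hsj : s = (range (n + 1)).erase j := by
    rw [← sdiff_singleton_eq_erase, ← hj, Finset.sdiff_sdiff_eq_self hs.subset_range]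
  have hjn : j ∈ range (n + 1) := (mem_sdiff.1 (hj ▸ mem_singleton_self j)).1
  have hj₀ := ne_of_mem_erase (hsj ▸ hs.zero_mem)
  have hj₁ := ne_of_mem_erase (hsj ▸ hs.top_mem hcard)
  have hj₂ := ne_of_mem_erase (hsj ▸ hs.pred_top_mem hcard)
  rw [mem_range] at hjn
  exact ⟨j, by omega, by omega, hsj⟩

end AdmissiblePattern

/-- The offsets in `{0, …, n}` at distance `-1`, `1` or `2` from `i`. -/
def neighbors (n i : ℕ) : Finset ℕ := {x ∈ range (n + 1) | x + 1 = i ∨ x = i + 1 ∨ x = i + 2}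

section Neighbors

variable {n i x : ℕ}

lemma mem_neighbors : x ∈ neighbors n i ↔ x ≤ n ∧ (x + 1 = i ∨ x = i + 1 ∨ x = i + 2) := by
  simp [neighbors]

lemma two_le_card_neighbors (hn : 2 ≤ n) (hi : i < n) : 2 ≤ #(neighbors n i) := by
  refine one_lt_card.2 ⟨i + 1, mem_neighbors.2 (by omega), if i = 0 then 2 else i - 1,
    mem_neighbors.2 ?_, ?_⟩ <;> split_ifs <;> omega

lemma AdmissiblePattern.card_add_card_le_of_disjoint_neighbors {s : Finset ℕ} {α : Type*}
    (hs : AdmissiblePattern n s) (hn : 2 ≤ n) {U : Finset α} {i : α → ℕ} (hi : ∀ t ∈ U, i t ≤ n)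
    (hU : (U : Set α).PairwiseDisjoint fun t => neighbors n (i t))
    (hUs : ∀ t ∈ U, Disjoint (neighbors n (i t)) s) : #U + #s ≤ n := by
  classical
  have hpred : ∀ t ∈ U, i t = n → n - 1 ∈ neighbors n (i t) := fun t _ h =>
    mem_neighbors.2 (by omega)
  have htop : #{t ∈ U | i t = n} ≤ 1 := card_le_one.2 fun t ht t' ht' => by
    rw [mem_filter] at ht ht'
    exact hU.elim_finset ht.1 ht'.1 _ (hpred t ht.1 ht.2) (hpred t' ht'.1 ht'.2)
  have htop_of_full : #s = n → #{t ∈ U | i t = n} = 0 := fun h => by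
    rw [card_eq_zero, filter_eq_empty_iff]
    exact fun t ht hit => disjoint_left.1 (hUs t ht) (hpred t ht hit) (hs.pred_top_mem h)
  have hcount : 2 * #{t ∈ U | ¬ i t = n} + #{t ∈ U | i t = n} ≤ n + 1 - #s := calc
    _ = ∑ t ∈ U, if i t = n then 1 else 2 := by
      rw [sum_ite, sum_const, sum_const, smul_eq_mul, smul_eq_mul]; omega
    _ ≤ ∑ t ∈ U, #(neighbors n (i t)) := by
      refine sum_le_sum fun t ht => ?_
      split_ifs with h
      · exact card_pos.2 ⟨_, hpred t ht h⟩
      · exact two_le_card_neighbors hn (lt_of_le_of_ne (hi t ht) h)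
    _ = #(U.biUnion fun t => neighbors n (i t)) := (card_biUnion hU).symm
    _ ≤ #(range (n + 1) \ s) := card_le_card <| biUnion_subset.2 fun t ht =>
      subset_sdiff.2 ⟨filter_subset _ _, hUs t ht⟩
    _ = n + 1 - #s := hs.card_range_sdiff
  have hsplit := card_filter_add_card_filter_not (s := U) (fun t => i t = n)
  have hle := hs.card_le
  by_cases hfull : #s = n
  · have := htop_of_full hfull
    omega
  · omega

end Neighbors

/-- The addition in base `2` with end-around carry of the numbers with binary supports
`shift t + bits t`, the columns being indexed by `ZMod k`.

The carry into column `q` is `excess q + 1`: all carries are positive, as the sum is a nonzero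
multiple of `2 ^ k - 1`. -/
structure CyclicSum (k : ℕ) (ι : Type*) [Fintype ι] where
  shift : ι → ZMod k
  bits : ι → Finset ℕ
  excess : ZMod k → ℕ
  two_mul_carry (q : ZMod k) : 2 * (excess (q + 1) + 1) =
    excess q + 1 + #{p ∈ univ.sigma bits | shift p.1 + (p.2 : ZMod k) = q}

namespace CyclicSum

variable {n k : ℕ} {ι : Type*} [Fintype ι] (S : CyclicSum k ι)

/-- The binary digits `1` of all the summands; `⟨t, i⟩` is the digit `i` of the summand `t`. -/
def ones : Finset (Σ _ : ι, ℕ) := univ.sigma S.bits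

/-- The column in which a digit is placed. -/
def column (p : Σ _ : ι, ℕ) : ZMod k := S.shift p.1 + p.2

/-- The digits `1` in column `q`. -/
def onesIn (q : ZMod k) : Finset (Σ _ : ι, ℕ) := {p ∈ S.ones | S.column p = q}

/-- A column is active if the carry into it or the carry out of it exceeds `1`. -/
def IsActive (q : ZMod k) : Prop := S.excess q ≠ 0 ∨ S.excess (q + 1) ≠ 0

/-- A summand is quiet if it has no digit `1` in an active column. -/
def IsQuiet (t : ι) : Prop := ∀ i ∈ S.bits t, ¬ S.IsActive (S.column ⟨t, i⟩)

/-- A digit leads if its summand has `n` digits `1` and none of those above it lies in an active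
column. -/
def IsLeading (n : ℕ) (p : Σ _ : ι, ℕ) : Prop :=
  #(S.bits p.1) = n ∧ ∀ i ∈ S.bits p.1, p.2 < i → ¬ S.IsActive (S.column ⟨p.1, i⟩)

instance : DecidablePred S.IsActive := fun _ => inferInstanceAs (Decidable (_ ∨ _))

instance : DecidablePred S.IsQuiet := fun _ => inferInstanceAs (Decidable (∀ _ ∈ _, _))

instance : DecidablePred (S.IsLeading n) := fun _ => inferInstanceAs (Decidable (_ ∧ _))

variable {S}

lemma mem_ones {p : Σ _ : ι, ℕ} : p ∈ S.ones ↔ p.2 ∈ S.bits p.1 := by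
  simp [ones]

lemma mem_onesIn {q : ZMod k} {p : Σ _ : ι, ℕ} :
    p ∈ S.onesIn q ↔ p.2 ∈ S.bits p.1 ∧ S.column p = q := by
  simp [onesIn, mem_ones]

lemma two_mul_excess_add_one (q : ZMod k) :
    2 * S.excess (q + 1) + 1 = S.excess q + #(S.onesIn q) := by
  have := S.two_mul_carry q
  change _ = _ + #(S.onesIn q) at this
  omega

lemma not_isActive_iff {q : ZMod k} :
    ¬ S.IsActive q ↔ S.excess q = 0 ∧ S.excess (q + 1) = 0 := by
  simp [IsActive]

lemma card_onesIn_of_not_isActive {q : ZMod k} (hq : ¬ S.IsActive q) : #(S.onesIn q) = 1 := by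
  have := S.two_mul_excess_add_one q
  rw [not_isActive_iff] at hq
  omega

section Sums

variable [NeZero k]

lemma sum_excess_add_one : ∑ q, S.excess (q + 1) = ∑ q, S.excess q :=
  Equiv.sum_comp (Equiv.addRight (1 : ZMod k)) S.excess

lemma sum_excess_add : ∑ q, S.excess q + k = ∑ t, #(S.bits t) := by
  have hones : ∑ q, #(S.onesIn q) = ∑ t, #(S.bits t) :=
    (card_eq_sum_card_fiberwise fun _ _ => mem_coe.2 (mem_univ _)).symm.trans (card_sigma _ _)
  have hsum : ∑ q, (2 * S.excess (q + 1) + 1) = ∑ q, (S.excess q + #(S.onesIn q)) :=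
    sum_congr rfl fun q _ => S.two_mul_excess_add_one q
  simp only [sum_add_distrib, ← mul_sum, sum_excess_add_one, hones, sum_const, card_univ,
    ZMod.card, smul_eq_mul, mul_one] at hsum
  omega

lemma card_ones_filter_isActive :
    #{p ∈ S.ones | S.IsActive (S.column p)} = ∑ q, S.excess q + #{q | S.IsActive q} := by
  have hfiber : #{p ∈ S.ones | S.IsActive (S.column p)} =
      ∑ q with S.IsActive q, #(S.onesIn q) := by
    rw [card_eq_sum_card_fiberwise (f := S.column) (t := ({q | S.IsActive q} : Finset _))]
    · refine sum_congr rfl fun q hq => congrArg card ?_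
      simp only [mem_filter, mem_univ, true_and] at hq
      grind [onesIn]
    · exact fun p hp => by simpa using (mem_filter.1 hp).2
  have hcarry : ∑ q with S.IsActive q, (2 * S.excess (q + 1) + 1) =
      ∑ q with S.IsActive q, (S.excess q + #(S.onesIn q)) :=
    sum_congr rfl fun q _ => S.two_mul_excess_add_one q
  have hinactive (q : ZMod k) (hq : q ∉ ({q | S.IsActive q} : Finset _)) :
      S.excess q = 0 ∧ S.excess (q + 1) = 0 :=
    not_isActive_iff.1 fun h => hq (mem_filter.2 ⟨mem_univ q, h⟩)
  have hin : ∑ q with S.IsActive q, S.excess q = ∑ q, S.excess q :=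
    sum_subset (subset_univ _) fun q _ hq => (hinactive q hq).1
  have hout : ∑ q with S.IsActive q, S.excess (q + 1) = ∑ q, S.excess q :=
    (sum_subset (subset_univ _) fun q _ hq => (hinactive q hq).2).trans sum_excess_add_one
  simp only [sum_add_distrib, ← mul_sum, hin, hout, sum_const, smul_eq_mul, mul_one,
    ← hfiber] at hcarry
  omega

lemma card_isActive_le :
    #{q | S.IsActive q} ≤ #{q | S.excess q = 0 ∧ S.excess (q + 1) ≠ 0} + ∑ q, S.excess q := by
  have hpos : #{q | S.excess q ≠ 0} ≤ ∑ q, S.excess q := by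
    rw [card_filter]
    refine sum_le_sum fun q _ => ?_
    split_ifs <;> omega
  calc #{q | S.IsActive q}
      ≤ #(({q | S.excess q = 0 ∧ S.excess (q + 1) ≠ 0} : Finset _) ∪
          ({q | S.excess q ≠ 0} : Finset _)) := card_le_card fun q => by
        simp only [mem_union, mem_filter, mem_univ, true_and]
        unfold IsActive
        tauto
    _ ≤ _ := (card_union_le _ _).trans (by gcongr)

end Sums

section Leading

variable (hS : ∀ t, AdmissiblePattern n (S.bits t)) {b : ZMod k}

include hS

lemma card_top_onesIn_le_one (hfull : ∀ p ∈ S.onesIn b, #(S.bits p.1) = n)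
    (hb : S.excess b = 0) : #{p ∈ S.onesIn b | p.2 = n} ≤ 1 := by
  have hprev : #(S.onesIn (b - 1)) ≤ 1 := by
    have := S.two_mul_excess_add_one (b - 1)
    rw [sub_add_cancel] at this
    omega
  refine (card_le_card_of_injOn (fun p => ⟨p.1, n - 1⟩) ?_ ?_).trans hprev
  · rintro ⟨t, i⟩ hp
    obtain ⟨hp, hin⟩ := mem_filter.1 (mem_coe.1 hp)
    obtain ⟨j, -, hjn, -⟩ := (hS t).exists_eq_erase (hfull _ hp)
    refine mem_onesIn.2 ⟨(hS t).pred_top_mem (hfull _ hp), ?_⟩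
    rw [← (mem_onesIn.1 hp).2, column, column, hin, Nat.cast_sub (by omega)]
    push_cast
    ring
  · rintro ⟨t, i⟩ hp ⟨t', i'⟩ hp' h
    simp_all

lemma mem_onesIn_add_two {p : Σ _ : ι, ℕ} (hp : p ∈ S.onesIn b) (hlead : S.IsLeading n p)
    (hb : S.excess (b + 1) ≠ 0) (hpn : p.2 ≠ n) :
    ⟨p.1, p.2 + 2⟩ ∈ S.onesIn (b + 2) ∧ ¬ S.IsActive (b + 2) := by
  obtain ⟨t, i⟩ := p
  obtain ⟨hi, rfl⟩ := mem_onesIn.1 hp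
  obtain ⟨hfull, hquiet⟩ := hlead
  obtain ⟨j, -, hjn, hbits⟩ := (hS t).exists_eq_erase hfull
  have hcol (e : ℕ) : S.column ⟨t, i + e⟩ = S.column ⟨t, i⟩ + e := by
    simp [column, add_assoc]
  simp only [hbits, mem_erase, mem_range] at hi hquiet hpn
  have hhole : i + 1 = j := by
    by_contra hne
    refine hquiet (i + 1) (by omega) (by omega) (Or.inl ?_)
    simpa [hcol] using hb
  have hmem : i + 2 ∈ S.bits t := by
    rw [hbits, mem_erase, mem_range]
    omega
  have hcol₂ : S.column ⟨t, i + 2⟩ = S.column ⟨t, i⟩ + 2 := by simpa using hcol 2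
  refine ⟨mem_onesIn.2 ⟨hmem, hcol₂⟩, hcol₂ ▸ hquiet (i + 2) ?_ (by omega)⟩
  omega

lemma exists_mem_onesIn_not_isLeading (hb : S.excess b = 0) (hb' : S.excess (b + 1) ≠ 0) :
    ∃ p ∈ S.onesIn b, ¬ S.IsLeading n p := by
  by_contra! hlead
  have htop := card_top_onesIn_le_one hS (fun p hp => (hlead p hp).1) hb
  have hrest : #{p ∈ S.onesIn b | ¬ p.2 = n} ≤ 1 := by
    rcases eq_empty_or_nonempty {p ∈ S.onesIn b | ¬ p.2 = n} with h | ⟨p, hp⟩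
    · simp [h]
    have hnext (p) (hp : p ∈ ({p ∈ S.onesIn b | ¬ p.2 = n} : Finset _)) :=
      mem_onesIn_add_two hS (mem_filter.1 hp).1 (hlead p (mem_filter.1 hp).1) hb'
        (mem_filter.1 hp).2
    rw [← card_onesIn_of_not_isActive (hnext p hp).2]
    refine card_le_card_of_injOn (fun p => ⟨p.1, p.2 + 2⟩) (fun p hp => (hnext p hp).1) ?_
    rintro ⟨t, i⟩ - ⟨t', i'⟩ - h
    simpa using h
  have hcarry := S.two_mul_excess_add_one b
  have hsplit := card_filter_add_card_filter_not (s := S.onesIn b) (fun p => p.2 = n)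
  omega

omit hS in
lemma card_full_not_isQuiet_le_card_isLeading :
    #{t | #(S.bits t) = n ∧ ¬ S.IsQuiet t} ≤
      #{p ∈ ({p ∈ S.ones | S.IsActive (S.column p)} : Finset _) | S.IsLeading n p} := by
  classical
  refine (card_le_card fun t ht => ?_).trans (card_image_le (f := Sigma.fst))
  obtain ⟨hfull, hquiet⟩ := (mem_filter.1 ht).2
  have hne : {i ∈ S.bits t | S.IsActive (S.column ⟨t, i⟩)}.Nonempty := by
    simpa [IsQuiet, Finset.Nonempty] using hquiet
  obtain ⟨m, hm, hmax⟩ := exists_max_image _ id hne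
  rw [mem_filter] at hm
  refine mem_image.2 ⟨⟨t, m⟩, mem_filter.2 ⟨mem_filter.2 ⟨mem_ones.2 hm.1, hm.2⟩, hfull, ?_⟩, rfl⟩
  exact fun i hi hmi hact => (hmax i (mem_filter.2 ⟨hi, hact⟩)).not_gt hmi

lemma card_excess_run_starts_le_card_not_isLeading [NeZero k] :
    #{q | S.excess q = 0 ∧ S.excess (q + 1) ≠ 0} ≤
      #{p ∈ ({p ∈ S.ones | S.IsActive (S.column p)} : Finset _) | ¬ S.IsLeading n p} := by
  classical
  refine (card_le_card fun q hq => ?_).trans (card_image_le (f := S.column))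
  obtain ⟨hq₀, hq₁⟩ := (mem_filter.1 hq).2
  obtain ⟨p, hp, hlead⟩ := exists_mem_onesIn_not_isLeading hS hq₀ hq₁
  obtain ⟨hmem, rfl⟩ := mem_onesIn.1 hp
  exact mem_image.2 ⟨p, mem_filter.2 ⟨mem_filter.2 ⟨mem_ones.2 hmem, .inr hq₁⟩, hlead⟩, rfl⟩

theorem card_full_not_isQuiet_le [NeZero k] :
    #{t | #(S.bits t) = n ∧ ¬ S.IsQuiet t} ≤ 2 * ∑ q, S.excess q := by
  have hlead := S.card_full_not_isQuiet_le_card_isLeading (n := n)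
  have hstart := card_excess_run_starts_le_card_not_isLeading hS
  have hsplit := card_filter_add_card_filter_not
    (s := {p ∈ S.ones | S.IsActive (S.column p)}) (fun p => S.IsLeading n p)
  have hones := S.card_ones_filter_isActive
  have hactive := S.card_isActive_le
  omega

end Leading

/-- The digit `p` fills the column which the summand `t`, having `n` digits `1` among the digits
`0, …, n`, misses. -/
def Fills (S : CyclicSum k ι) (n : ℕ) (p : Σ _ : ι, ℕ) (t : ι) : Prop :=
  p.2 ∈ S.bits p.1 ∧ ∃ j, 0 < j ∧ j + 2 ≤ n ∧ S.bits t = (range (n + 1)).erase j ∧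
    S.column p = S.column ⟨t, j⟩

section Quiet

lemma IsQuiet.eq_of_column_eq {t : ι} (ht : S.IsQuiet t) {i : ℕ} (hi : i ∈ S.bits t)
    {p : Σ _ : ι, ℕ} (hp : p.2 ∈ S.bits p.1) (h : S.column p = S.column ⟨t, i⟩) : p = ⟨t, i⟩ :=
  card_le_one.1 (card_onesIn_of_not_isActive (ht i hi)).le _ (mem_onesIn.2 ⟨hp, h⟩) _
    (mem_onesIn.2 ⟨hi, rfl⟩)

lemma IsQuiet.exists_fills {t : ι} (ht : S.IsQuiet t) (hS : AdmissiblePattern n (S.bits t))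
    (hfull : #(S.bits t) = n) : ∃ p, S.Fills n p t := by
  obtain ⟨j, hj, hjn, hbits⟩ := hS.exists_eq_erase hfull
  have hcol (i : ℕ) : S.column ⟨t, i + 1⟩ = S.column ⟨t, i⟩ + 1 := by
    simp [column, add_assoc]
  have hbelow := ht (j - 1) (by rw [hbits, mem_erase, mem_range]; omega)
  have habove := ht (j + 1) (by rw [hbits, mem_erase, mem_range]; omega)
  simp only [not_isActive_iff, ← hcol, Nat.sub_add_cancel hj] at hbelow habove
  have hcarry := S.two_mul_excess_add_one (S.column ⟨t, j⟩)
  rw [← hcol] at hcarry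
  obtain ⟨p, hp⟩ := card_pos.1 (show 0 < #(S.onesIn (S.column ⟨t, j⟩)) by omega)
  exact ⟨p, (mem_onesIn.1 hp).1, j, hj, hjn, hbits, (mem_onesIn.1 hp).2⟩

lemma Fills.exists_mem_bits {p : Σ _ : ι, ℕ} {t : ι} (h : S.Fills n p t) {x : ℕ}
    (hx : x ∈ neighbors n p.2) :
    ∃ i ∈ S.bits t, S.column ⟨p.1, x⟩ = S.column ⟨t, i⟩ ∧ (x = i → p.2 ∉ S.bits t) := by
  obtain ⟨-, j, hj, hjn, hbits, hcol⟩ := h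
  obtain ⟨-, hx⟩ := mem_neighbors.1 hx
  obtain ⟨i, hi⟩ : ∃ i, i + p.2 = x + j := ⟨x + j - p.2, by omega⟩
  refine ⟨i, ?_, ?_, ?_⟩
  · rw [hbits, mem_erase, mem_range]
    omega
  · have hcast := congrArg (Nat.cast : ℕ → ZMod k) hi
    push_cast at hcast
    simp only [column] at hcol ⊢
    linear_combination hcol - hcast
  · rintro rfl
    simp [hbits, show p.2 = j by omega]

lemma Fills.disjoint_neighbors {p : Σ _ : ι, ℕ} {t : ι} (h : S.Fills n p t) (ht : S.IsQuiet t) :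
    Disjoint (neighbors n p.2) (S.bits p.1) := by
  refine disjoint_left.2 fun x hx hxp => ?_
  obtain ⟨i, hi, hcol, hne⟩ := h.exists_mem_bits hx
  have heq := ht.eq_of_column_eq hi (p := ⟨p.1, x⟩) hxp hcol
  simp only [Sigma.mk.injEq, heq_eq_eq] at heq
  exact hne heq.2 (heq.1 ▸ h.1)

lemma Fills.eq_of_mem_neighbors {p p' : Σ _ : ι, ℕ} {t t' : ι} (h : S.Fills n p t)
    (h' : S.Fills n p' t') (ht : S.IsQuiet t) (hpp' : p.1 = p'.1) {x : ℕ}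
    (hx : x ∈ neighbors n p.2) (hx' : x ∈ neighbors n p'.2) : t = t' := by
  obtain ⟨i, hi, hcol, -⟩ := h.exists_mem_bits hx
  obtain ⟨i', hi', hcol', -⟩ := h'.exists_mem_bits hx'
  have heq := ht.eq_of_column_eq hi (p := ⟨t', i'⟩) hi' (by rw [← hcol, ← hcol', hpp'])
  exact congrArg Sigma.fst heq.symm

lemma card_add_card_bits_le_of_fills (hS : ∀ t, AdmissiblePattern n (S.bits t)) {s : ι}
    {U : Finset ι} {p : ι → Σ _ : ι, ℕ} (hU : ∀ t ∈ U, S.IsQuiet t)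
    (hp : ∀ t ∈ U, S.Fills n (p t) t) (hs : ∀ t ∈ U, (p t).1 = s) : #U + #(S.bits s) ≤ n := by
  rcases U.eq_empty_or_nonempty with rfl | ⟨t₀, ht₀⟩
  · simpa using (hS s).card_le
  obtain ⟨-, j, -, hjn, -⟩ := hp t₀ ht₀
  refine (hS s).card_add_card_le_of_disjoint_neighbors (i := fun t => (p t).2)
    (by omega) (fun t ht => ?_) (fun t ht t' ht' hne => ?_) (fun t ht => ?_)
  · exact Nat.le_of_lt_succ (mem_range.1 ((hS _).subset_range (hp t ht).1))
  · refine disjoint_left.2 fun x hx hx' => hne ?_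
    exact (hp t ht).eq_of_mem_neighbors (hp t' ht') (hU t ht)
      ((hs t ht).trans (hs t' ht').symm) hx hx'
  · exact hs t ht ▸ (hp t ht).disjoint_neighbors (hU t ht)

theorem card_full_isQuiet_le (hS : ∀ t, AdmissiblePattern n (S.bits t)) :
    #{t | #(S.bits t) = n ∧ S.IsQuiet t} ≤ ∑ t, (n - #(S.bits t)) := by
  classical
  have hfill (t : ι) (ht : t ∈ ({t | #(S.bits t) = n ∧ S.IsQuiet t} : Finset ι)) :
      ∃ p, S.Fills n p t :=
    (mem_filter.1 ht).2.2.exists_fills (hS t) (mem_filter.1 ht).2.1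
  choose! p hp using hfill
  rw [card_eq_sum_card_fiberwise (f := fun t => (p t).1) (t := univ) (by simp)]
  refine sum_le_sum fun s _ => Nat.le_sub_of_add_le ?_
  refine card_add_card_bits_le_of_fills hS (p := p) (fun t ht => ?_) (fun t ht => ?_)
    (fun t ht => (mem_filter.1 ht).2)
  · exact (mem_filter.1 (mem_filter.1 ht).1).2.2
  · exact hp t (mem_filter.1 ht).1

end Quiet

theorem two_mul_add_card_le [NeZero k] (hS : ∀ t, AdmissiblePattern n (S.bits t)) :
    2 * k + Fintype.card ι ≤ 2 * n * Fintype.card ι := by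
  have hloud := card_full_not_isQuiet_le hS
  have hquiet := card_full_isQuiet_le hS
  have hnotfull : #{t | ¬ #(S.bits t) = n} ≤ ∑ t, (n - #(S.bits t)) := by
    rw [card_filter]
    refine sum_le_sum fun t _ => ?_
    have := (hS t).card_le
    split_ifs <;> omega
  have hsplit := card_filter_add_card_filter_not (s := univ) (fun t => #(S.bits t) = n)
  have hsplit' := card_filter_add_card_filter_not (s := {t | #(S.bits t) = n})
    (fun t => S.IsQuiet t)
  have hones := S.sum_excess_add
  have hdeficit : ∑ t, (n - #(S.bits t)) + ∑ t, #(S.bits t) = n * Fintype.card ι := by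
    rw [← sum_add_distrib, sum_congr rfl fun t _ => Nat.sub_add_cancel (hS t).card_le]
    simp [mul_comm]
  simp only [filter_filter, card_univ] at hsplit hsplit'
  rw [mul_assoc, ← hdeficit]
  omega

end CyclicSum

section BitIndices

lemma sum_two_pow_sdiff_bitIndices {n D : ℕ} (hD : D.bitIndices.toFinset ⊆ range n) :
    ∑ i ∈ range n \ D.bitIndices.toFinset, 2 ^ i = 2 ^ n - 1 - D := by
  have hsum := sum_sdiff (f := (2 ^ ·)) hD
  rw [sum_toFinset_bitIndices_two_pow, Nat.geomSum_eq le_rfl, Nat.div_one] at hsum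
  omega

theorem admissiblePattern_bitIndices {n D : ℕ} (hodd : Odd D) (hD : D ≤ 2 ^ (n + 1) - 3)
    (hD₁ : D ≠ 2 ^ n - 1) (hD₂ : D ≠ 3 * 2 ^ (n - 1) - 1) :
    AdmissiblePattern n D.bitIndices.toFinset := by
  have hpos := hodd.pos
  have hpow : 2 ^ (n + 1) = 2 * 2 ^ n := pow_succ' 2 n
  have hsub : D.bitIndices.toFinset ⊆ range (n + 1) := fun i hi =>
    mem_range.2 <| (Nat.pow_lt_pow_iff_right one_lt_two).1 <|
      (Nat.two_pow_le_of_mem_bitIndices (List.mem_toFinset.1 hi)).trans_lt (by omega)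
  have hmissing := sum_two_pow_sdiff_bitIndices hsub
  have hcard := card_sdiff_of_subset hsub
  have hle := card_le_card hsub
  rw [card_range] at hcard hle
  have hmem_of_full (j : ℕ) (hj : j ≤ n) (hDj : D ≠ 2 ^ (n + 1) - 1 - 2 ^ j)
      (hfull : #D.bitIndices.toFinset = n) : j ∈ D.bitIndices.toFinset := by
    by_contra hjD
    have hsingle : range (n + 1) \ D.bitIndices.toFinset = {j} := by
      refine (eq_of_subset_of_card_le (singleton_subset_iff.2 ?_) ?_).symm
      · exact mem_sdiff.2 ⟨mem_range.2 (by omega), hjD⟩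
      · rw [card_singleton]; omega
    rw [hsingle, sum_singleton] at hmissing
    omega
  refine ⟨?_, hsub, ?_, hmem_of_full n le_rfl (by omega), hmem_of_full (n - 1) (by omega) ?_⟩
  · rw [List.mem_toFinset, Nat.mem_bitIndices, Nat.testBit_zero, decide_eq_true_iff]
    exact Nat.odd_iff.1 hodd
  · by_contra hlt
    rw [card_eq_zero.1 (show #(range (n + 1) \ D.bitIndices.toFinset) = 0 by omega),
      sum_empty] at hmissing
    omega
  · rcases n with _ | n
    · omega
    · rw [Nat.add_sub_cancel] at hD₂ ⊢
      rw [pow_succ'] at hpow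
      omega

end BitIndices

theorem two_mul_add_card_le_of_dvd {n k : ℕ} {ι : Type*} [Fintype ι] [Nonempty ι] {d r : ι → ℕ}
    (hd : ∀ t, AdmissiblePattern n (d t).bitIndices.toFinset)
    (hdvd : 2 ^ k - 1 ∣ ∑ t, 2 ^ r t * d t) :
    2 * k + Fintype.card ι ≤ 2 * n * Fintype.card ι := by
  rcases k.eq_zero_or_pos with rfl | hk
  · obtain ⟨t⟩ := ‹Nonempty ι›
    have hn : 0 < n := (card_pos.2 ⟨0, (hd t).zero_mem⟩).trans_le (hd t).card_le
    nlinarith [Nat.zero_le (Fintype.card ι)]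
  have : NeZero k := ⟨hk.ne'⟩
  have hsum : ∑ t, 2 ^ r t * d t =
      ∑ p ∈ univ.sigma fun t => (d t).bitIndices.toFinset, 2 ^ (r p.1 + p.2) := by
    simp only [sum_sigma, pow_add, ← mul_sum, sum_toFinset_bitIndices_two_pow]
  have hne : (univ.sigma fun t => (d t).bitIndices.toFinset).Nonempty :=
    ⟨⟨Classical.arbitrary ι, 0⟩, mem_sigma.2 ⟨mem_univ _, (hd _).zero_mem⟩⟩
  obtain ⟨w, hw⟩ := exists_cyclic_carry one_lt_two hne (hsum ▸ hdvd)
  let S : CyclicSum k ι :=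
    { shift := fun t => r t
      bits := fun t => (d t).bitIndices.toFinset
      excess := fun q => w q - 1
      two_mul_carry := fun q => by
        rw [Nat.sub_add_cancel (hw _).1, Nat.sub_add_cancel (hw _).1, (hw q).2]
        push_cast
        rfl }
  exact S.two_mul_add_card_le hd

section Legendre

lemma sum_digits_two (m : ℕ) : (Nat.digits 2 m).sum = #m.bitIndices.toFinset := by
  rw [List.toFinset_card_of_nodup Nat.bitIndices_nodup, Nat.digits_two_eq_bits]
  induction m using Nat.binaryRec' with
  | zero => simp
  | bit b m h ih =>
    rw [Nat.bits_append_bit m b h, List.map_cons, List.sum_cons, ih]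
    cases b
    · simp
    · simp [add_comm 1 (List.length _)]

lemma sub_one_mul_factorization_factorial_add {p : ℕ} (hp : p.Prime) (m : ℕ) :
    (p - 1) * m.factorial.factorization p + (Nat.digits p m).sum = m := by
  rw [Nat.sub_one_mul_factorization_factorial hp, Nat.sub_add_cancel (Nat.digit_sum_le p m)]

theorem sub_one_mul_factorization_multinomial_add {p : ℕ} (hp : p.Prime) {α : Type*}
    (s : Finset α) (a : α → ℕ) :
    (p - 1) * (Nat.multinomial s a).factorization p + (Nat.digits p (∑ i ∈ s, a i)).sum =
      ∑ i ∈ s, (Nat.digits p (a i)).sum := by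
  have hfac : ∀ i ∈ s, (a i).factorial ≠ 0 := fun i _ => (a i).factorial_ne_zero
  have hval : (∑ i ∈ s, a i).factorial.factorization p =
      ∑ i ∈ s, (a i).factorial.factorization p + (Nat.multinomial s a).factorization p := by
    rw [← Nat.factorization_prod_apply hfac, ← Nat.multinomial_spec,
      Nat.factorization_mul (prod_ne_zero_iff.2 hfac) (Nat.multinomial_pos s a).ne',
      Finsupp.add_apply]
  have htotal := sub_one_mul_factorization_factorial_add hp (∑ i ∈ s, a i)
  have hparts : ∑ i ∈ s, ((p - 1) * (a i).factorial.factorization p + (Nat.digits p (a i)).sum) =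
      ∑ i ∈ s, a i :=
    sum_congr rfl fun i _ => sub_one_mul_factorization_factorial_add hp (a i)
  rw [sum_add_distrib, ← mul_sum] at hparts
  rw [hval, mul_add] at htotal
  omega

theorem two_pow_dvd_two_mul_multinomial {α : Type*} {s : Finset α} {a : α → ℕ} {E : ℕ}
    (h : ∑ i ∈ s, a i = 2 ^ E) :
    2 ^ ∑ i ∈ s, #(a i).bitIndices.toFinset ∣ 2 * Nat.multinomial s a := by
  have hval := sub_one_mul_factorization_multinomial_add Nat.prime_two s a
  simp only [h, sum_digits_two, Nat.bitIndices_two_pow, List.toFinset_cons, List.toFinset_nil,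
    insert_empty_eq, card_singleton, Nat.add_one_sub_one, one_mul] at hval
  rw [← hval, pow_succ']
  exact mul_dvd_mul_left 2 (Nat.ordProj_dvd _ _)

end Legendre

lemma sum_monoidHom_pow_eq_zero {L R : Type*} [Field L] [Fintype L] [CommRing R] [IsDomain R]
    {φ : L →* R} (hφ : Function.Injective φ) {e : ℕ} (he : ¬ Fintype.card L - 1 ∣ e) :
    ∑ x, φ x ^ e = 0 := by
  rw [← FiniteField.forall_pow_eq_one_iff] at he
  push Not at he
  obtain ⟨u, hu⟩ := he
  have hu' : φ u ^ e ≠ 1 := fun h => hu <| Units.ext <| hφ (by simpa using h)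
  refine eq_zero_of_mul_eq_self_left hu' ?_
  rw [mul_sum, ← Equiv.sum_comp (Units.mulLeft u) fun x => φ x ^ e]
  simp [mul_pow]

lemma pow_dvd_of_natCast_pow_dvd_intCast {R : Type*} [CommRing R] [IsDomain R] {p : ℕ}
    (hp : p.Prime) (hp₀ : (p : R) ≠ 0) (hpu : ¬ IsUnit (p : R)) {E : ℕ} {N : ℤ}
    (h : (p : R) ^ E ∣ (N : R)) : (p : ℤ) ^ E ∣ N := by
  induction E generalizing N with
  | zero => simp
  | succ E ih =>
    have hpN : (p : ℤ) ∣ N := by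
      by_contra hN
      have hcop := ((Nat.prime_iff_prime_int.1 hp).coprime_iff_not_dvd.2 hN).map (Int.castRingHom R)
      simp only [map_natCast, eq_intCast] at hcop
      exact hpu <| hcop.isUnit_of_dvd' dvd_rfl ((dvd_pow_self _ E.succ_ne_zero).trans h)
    obtain ⟨N, rfl⟩ := hpN
    push_cast at h
    rw [pow_succ', mul_dvd_mul_iff_left hp₀] at h
    rw [pow_succ']
    exact mul_dvd_mul_left _ (ih h)

/-- `E` is at most the number of terms of every nonempty sum `∑ t, 2 ^ r t * d t` with terms
`d t ∈ D` which is divisible by `2 ^ k - 1`. The least number of terms, minimized over `k` after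
division by `k`, is the `2`-density of `D`. -/
def RelationLengthAtLeast (k : ℕ) (D : Finset ℕ) (E : ℕ) : Prop :=
  ∀ {ι : Type} [Fintype ι] [Nonempty ι] (d r : ι → ℕ), (∀ t, d t ∈ D) →
    2 ^ k - 1 ∣ ∑ t, 2 ^ r t * d t → E ≤ Fintype.card ι

lemma RelationLengthAtLeast.le_sum_card_bitIndices {k E : ℕ} {D : Finset ℕ}
    (h : RelationLengthAtLeast k D E) {P : Finset (ℕ × ℕ)} (hP : ∀ z ∈ P, z.1 ∈ D)
    {u : ℕ × ℕ → ℕ} (hu : ∑ z ∈ P, u z ≠ 0)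
    (hdvd : 2 ^ k - 1 ∣ ∑ z ∈ P, z.1 * 2 ^ z.2 * u z) :
    E ≤ ∑ z ∈ P, #(u z).bitIndices.toFinset := by
  let T : Finset (Σ _ : ℕ × ℕ, ℕ) := P.sigma fun z => (u z).bitIndices.toFinset
  have hT : ∑ t : T, 2 ^ (t.1.1.2 + t.1.2) * t.1.1.1 = ∑ z ∈ P, z.1 * 2 ^ z.2 * u z := by
    rw [sum_coe_sort T fun t => 2 ^ (t.1.2 + t.2) * t.1.1, sum_sigma]
    refine sum_congr rfl fun z _ => ?_
    conv_rhs => rw [← sum_toFinset_bitIndices_two_pow (u z), mul_sum]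
    exact sum_congr rfl fun i _ => by ring
  have : Nonempty T := by
    by_contra hempty
    obtain ⟨z, hz, huz⟩ := exists_ne_zero_of_sum_ne_zero hu
    obtain ⟨i, hi⟩ : (u z).bitIndices.toFinset.Nonempty := nonempty_iff_ne_empty.2 fun h₀ =>
      huz (by rw [← sum_toFinset_bitIndices_two_pow (u z), h₀, sum_empty])
    exact hempty ⟨⟨z, i⟩, mem_sigma.2 ⟨hz, hi⟩⟩
  calc E ≤ Fintype.card T :=
        h (fun t : T => t.1.1.1) (fun t => t.1.1.2 + t.1.2)
          (fun t => hP _ (mem_sigma.1 t.2).1) (hT ▸ hdvd)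
    _ = ∑ z ∈ P, #(u z).bitIndices.toFinset := by rw [Fintype.card_coe, card_sigma]

section TeichmullerTrace

open Polynomial WittVector

/-- The sum of the Teichmüller representatives of all the terms of the trace
`∑ j < k, f(x) ^ p ^ j` of `f(x)`: a lift of the trace to the Witt vectors. -/
noncomputable def teichmullerTrace (p : ℕ) [Fact p.Prime] {L : Type*} [CommRing L] (f : L[X])
    (k : ℕ) (x : L) : WittVector p L :=
  ∑ z ∈ f.support ×ˢ range k, teichmuller p (f.coeff z.1 * x ^ z.1) ^ p ^ z.2

lemma coeff_zero_teichmullerTrace {p : ℕ} [Fact p.Prime] {L : Type*} [CommRing L] [CharP L p]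
    (f : L[X]) (k : ℕ) (x : L) :
    (teichmullerTrace p f k x).coeff 0 = ∑ j ∈ range k, f.eval x ^ p ^ j := by
  rw [← WittVector.constantCoeff_apply]
  simp only [teichmullerTrace, map_sum, map_pow, WittVector.constantCoeff_apply,
    teichmuller_coeff_zero, sum_product_right, eval_eq_sum, Polynomial.sum, sum_pow_char_pow]

lemma sum_teichmullerTrace_pow {p : ℕ} [Fact p.Prime] {L : Type*} [CommRing L] [Fintype L]
    (f : L[X]) (k N : ℕ) :
    ∑ x, teichmullerTrace p f k x ^ N = ∑ u ∈ piAntidiag (f.support ×ˢ range k) N,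
      (Nat.multinomial (f.support ×ˢ range k) u : WittVector p L) *
        ((∏ z ∈ f.support ×ˢ range k, teichmuller p (f.coeff z.1) ^ (p ^ z.2 * u z)) *
          ∑ x, teichmuller p x ^ ∑ z ∈ f.support ×ˢ range k, z.1 * p ^ z.2 * u z) := by
  simp only [teichmullerTrace, sum_pow_eq_sum_piAntidiag, mul_sum]
  rw [sum_comm]
  refine sum_congr rfl fun u _ => sum_congr rfl fun x _ => congrArg _ ?_
  rw [← prod_pow_eq_pow_sum, ← prod_mul_distrib]
  refine prod_congr rfl fun z _ => ?_
  rw [map_mul, map_pow, mul_pow, mul_pow, ← pow_mul, ← pow_mul, ← pow_mul, mul_assoc]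

variable {L : Type*} [Field L] [Fintype L] {k : ℕ}

lemma finrank_zmod_of_card_eq {p : ℕ} [Fact p.Prime] [Algebra (ZMod p) L]
    (hL : Fintype.card L = p ^ k) : Module.finrank (ZMod p) L = k := by
  have := Module.card_eq_pow_finrank (K := ZMod p) (V := L)
  rw [hL, ZMod.card] at this
  exact (Nat.pow_right_injective (Fact.out : p.Prime).two_le this).symm

lemma pow_dvd_teichmullerTrace_pow_sub {p : ℕ} [Fact p.Prime] [Algebra (ZMod p) L] [CharP L p]
    (hL : Fintype.card L = p ^ k) (f : L[X]) (E : ℕ) (x : L) :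
    (p : WittVector p L) ^ (E + 1) ∣ teichmullerTrace p f k x ^ p ^ E -
      ((Algebra.trace (ZMod p) L (f.eval x)).val : WittVector p L) ^ p ^ E := by
  refine dvd_sub_pow_of_dvd_sub ?_ E
  rw [← Ideal.mem_span_singleton, mem_span_p_iff_coeff_zero_eq_zero,
    ← WittVector.constantCoeff_apply, map_sub, WittVector.constantCoeff_apply,
    coeff_zero_teichmullerTrace, map_natCast, sub_eq_zero,
    ← map_natCast (algebraMap (ZMod p) L), ZMod.natCast_zmod_val,
    FiniteField.algebraMap_trace_eq_sum_pow, finrank_zmod_of_card_eq hL, Nat.card_zmod]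

lemma two_pow_dvd_two_mul_sum_teichmullerTrace_pow [CharP L 2] (hL : Fintype.card L = 2 ^ k)
    {f : L[X]} {E : ℕ} (h : RelationLengthAtLeast k f.support E) :
    (2 : WittVector 2 L) ^ E ∣ 2 * ∑ x, teichmullerTrace 2 f k x ^ 2 ^ E := by
  rw [sum_teichmullerTrace_pow, mul_sum]
  refine dvd_sum fun u hu => ?_
  have hsum : ∑ z ∈ f.support ×ˢ range k, u z = 2 ^ E := (mem_piAntidiag.1 hu).1
  by_cases hdvd : 2 ^ k - 1 ∣ ∑ z ∈ f.support ×ˢ range k, z.1 * 2 ^ z.2 * u z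
  · have hE := h.le_sum_card_bitIndices (fun z hz => (mem_product.1 hz).1)
      (hsum ▸ pow_ne_zero E two_ne_zero) hdvd
    have hmult := (pow_dvd_pow 2 hE).trans (two_pow_dvd_two_mul_multinomial hsum)
    rw [← mul_assoc]
    refine Dvd.dvd.mul_right ?_ _
    simpa using Nat.cast_dvd_cast (α := WittVector 2 L) hmult
  · have hinj : Function.Injective (teichmuller 2 : L →* WittVector 2 L) :=
      Function.LeftInverse.injective (g := fun w => w.coeff 0)
        fun x => teichmuller_coeff_zero 2 x
    rw [sum_monoidHom_pow_eq_zero hinj (by rwa [hL]), mul_zero, mul_zero, mul_zero]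
    exact dvd_zero _

/-- The exponential sum of `f` over the field `L` for the additive character
`y ↦ (-1) ^ Tr y`. -/
noncomputable def traceExpSum [Algebra (ZMod 2) L] (f : L[X]) : ℤ :=
  ∑ x, (-1) ^ (Algebra.trace (ZMod 2) L (f.eval x)).val

lemma neg_one_pow_eq_one_sub_two_mul_pow {R : Type*} [CommRing R] {v N : ℕ} (hv : v < 2)
    (hN : N ≠ 0) : (-1 : R) ^ v = 1 - 2 * (v : R) ^ N := by
  interval_cases v
  · simp [hN]
  · norm_num

lemma two_pow_dvd_traceExpSum_sub [Algebra (ZMod 2) L] [CharP L 2] (hL : Fintype.card L = 2 ^ k)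
    (f : L[X]) (E : ℕ) : (2 : WittVector 2 L) ^ (E + 1) ∣
      traceExpSum f - ∑ x, (1 - 2 * teichmullerTrace 2 f k x ^ 2 ^ E) := by
  rw [traceExpSum, Int.cast_sum, ← sum_sub_distrib]
  refine dvd_sum fun x _ => ?_
  have hcongr := (pow_dvd_teichmullerTrace_pow_sub hL f E x).mul_left 2
  push_cast at hcongr ⊢
  rw [neg_one_pow_eq_one_sub_two_mul_pow (ZMod.val_lt _) (pow_ne_zero E two_ne_zero),
    sub_sub_sub_cancel_left, ← mul_sub]
  exact hcongr

theorem two_pow_dvd_traceExpSum [Algebra (ZMod 2) L] (hL : Fintype.card L = 2 ^ k) {f : L[X]}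
    {E : ℕ} (hE : E ≤ k) (h : RelationLengthAtLeast k f.support E) : 2 ^ E ∣ traceExpSum f := by
  have : CharP L 2 := charP_of_injective_algebraMap (algebraMap (ZMod 2) L).injective 2
  have hsum : (2 : WittVector 2 L) ^ E ∣ ∑ x, (1 - 2 * teichmullerTrace 2 f k x ^ 2 ^ E) := by
    rw [sum_sub_distrib, ← mul_sum, sum_const, card_univ, hL, nsmul_one, Nat.cast_pow]
    exact dvd_sub (pow_dvd_pow _ hE) (two_pow_dvd_two_mul_sum_teichmullerTrace_pow hL h)
  have hwitt : (2 : WittVector 2 L) ^ E ∣ traceExpSum f :=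
    (dvd_iff_dvd_of_dvd_sub <|
      (pow_dvd_pow _ E.le_succ).trans (two_pow_dvd_traceExpSum_sub hL f E)).2 hsum
  exact pow_dvd_of_natCast_pow_dvd_intCast Nat.prime_two (p_nonzero 2 L)
    (irreducible 2).not_isUnit hwitt

end TeichmullerTrace

section OddPolynomial

open Polynomial

variable {L : Type*} [Semiring L]

/-- The polynomial with coefficients `c d` in the odd degrees `d ≤ 2 * g + 1`. -/
noncomputable def oddPolynomial (c : ℕ → L) (g : ℕ) : L[X] :=
  ∑ i ∈ range (g + 1), monomial (2 * i + 1) (c (2 * i + 1))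

lemma eval_oddPolynomial (c : ℕ → L) (g : ℕ) (x : L) :
    (oddPolynomial c g).eval x = ∑ i ∈ range (g + 1), c (2 * i + 1) * x ^ (2 * i + 1) := by
  simp only [oddPolynomial, eval_finsetSum, eval_monomial]

lemma exists_of_mem_support_oddPolynomial {c : ℕ → L} {g d : ℕ}
    (hd : d ∈ (oddPolynomial c g).support) : ∃ i ≤ g, d = 2 * i + 1 ∧ c d ≠ 0 := by
  rw [mem_support_iff, oddPolynomial, finsetSum_coeff] at hd
  obtain ⟨i, hi, hne⟩ := exists_ne_zero_of_sum_ne_zero hd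
  obtain ⟨rfl, hc⟩ : 2 * i + 1 = d ∧ c (2 * i + 1) ≠ 0 := by simpa [coeff_monomial] using hne
  exact ⟨i, Nat.le_of_lt_succ (mem_range.1 hi), rfl, hc⟩

end OddPolynomial

lemma ceil_two_mul_div_le {n k X : ℕ} (hn : 1 ≤ n) (h : 2 * k + X ≤ 2 * n * X) :
    ⌈(2 * k : ℚ) / (2 * n - 1)⌉₊ ≤ X := by
  have hn' : (1 : ℚ) ≤ n := by exact_mod_cast hn
  have h' : (2 * k + X : ℚ) ≤ 2 * n * X := by exact_mod_cast h
  rw [Nat.ceil_le, div_le_iff₀ (by linarith)]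
  linarith

theorem first_slope_case_iii_general {n : ℕ} (hn : 2 ≤ n) {L : Type*} [Field L] [Fintype L]
    [Algebra (ZMod 2) L] {k : ℕ} (hL : Fintype.card L = 2 ^ k) {g : ℕ}
    (hg : 2 * g + 1 ≤ 2 ^ (n + 1) - 3) {c : ℕ → L} (hc₁ : c (2 ^ n - 1) = 0)
    (hc₂ : c (3 * 2 ^ (n - 1) - 1) = 0) :
    (2 : ℤ) ^ ⌈(2 * k : ℚ) / (2 * n - 1)⌉₊ ∣ ∑ x : L, (-1 : ℤ) ^ (Algebra.trace (ZMod 2) L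
      (∑ i ∈ range (g + 1), c (2 * i + 1) * x ^ (2 * i + 1))).val := by
  have hadm : ∀ d ∈ (oddPolynomial c g).support, AdmissiblePattern n d.bitIndices.toFinset := by
    intro d hd
    obtain ⟨i, hi, rfl, hc⟩ := exists_of_mem_support_oddPolynomial hd
    exact admissiblePattern_bitIndices (odd_two_mul_add_one i) (by omega)
      (fun h => hc (h ▸ hc₁)) (fun h => hc (h ▸ hc₂))
  have hlength : RelationLengthAtLeast k (oddPolynomial c g).support
      ⌈(2 * k : ℚ) / (2 * n - 1)⌉₊ := fun _ _ hd hdvd =>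
    ceil_two_mul_div_le (by omega) (two_mul_add_card_le_of_dvd (fun t => hadm _ (hd t)) hdvd)
  have hle : ⌈(2 * k : ℚ) / (2 * n - 1)⌉₊ ≤ k := ceil_two_mul_div_le (by omega) (by nlinarith)
  simpa only [traceExpSum, eval_oddPolynomial] using two_pow_dvd_traceExpSum hL hle hlength

/-- For `n` large enough: let `q = 2^a` (`a ≥ 1`), `K` a field with `q` elements,
`f(x) = ∑_{i=0}^g c_{2i+1} x^{2i+1} ∈ K[x]` with `c_{2g+1} ≠ 0` and
`2g + 1 = 2^{n+1} − 3`.  If `c_{2^n−1} = 0` and `c_{3·2^{n−1}−1} = 0`, then for every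
`m ≥ 1` and every degree-`m` extension `L/K`, the exponential sum
`S_m(f) = ∑_{x ∈ L} (−1)^{Tr_{L/F₂}(f(x))}` is divisible by `2^{⌈2·a·m/(2n−1)⌉}`
(first slope at least `2/(2n−1)`).  (The `F₂ = ZMod 2`-algebra structure on `L` is
unique since `L` has characteristic 2.) -/
theorem first_slope_case_iii :
    ∃ N : ℕ, ∀ n : ℕ, N ≤ n → ∀ a : ℕ, 1 ≤ a →
      ∀ (K : Type) [Field K] [Fintype K], Fintype.card K = 2 ^ a →
      ∀ g : ℕ, 2 * g + 1 = 2 ^ (n + 1) - 3 →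
      ∀ c : ℕ → K, c (2 * g + 1) ≠ 0 → c (2 ^ n - 1) = 0 → c (3 * 2 ^ (n - 1) - 1) = 0 →
      ∀ m : ℕ, 1 ≤ m →
      ∀ (L : Type) [Field L] [Fintype L] [Algebra K L] [Algebra (ZMod 2) L],
        Module.finrank K L = m →
        (2 : ℤ) ^ (⌈(2 * a * m : ℚ) / (2 * (n : ℚ) - 1)⌉₊) ∣
          ∑ x : L, (-1 : ℤ) ^
            (Algebra.trace (ZMod 2) L
              (∑ i ∈ Finset.range (g + 1),
                algebraMap K L (c (2 * i + 1)) * x ^ (2 * i + 1))).val := by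
  refine ⟨2, fun n hn a _ K _ _ hK g hg c _ hc₁ hc₂ m _ L _ _ _ _ hm => ?_⟩
  have hL : Fintype.card L = 2 ^ (a * m) := by
    rw [Module.card_eq_pow_finrank (K := K), hK, hm, pow_mul]
  simpa [mul_assoc] using first_slope_case_iii_general hn hL hg.le
    (c := fun d => algebraMap K L (c d)) (by simp [hc₁]) (by simp [hc₂])
end
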